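/- arXiv:1008.2924 — 5 statements merged into one kernel-verified Lean document; each statement's English description precedes it below -/
import Mathlib

section
/- Let S = K[x_1,...,x_n] be a polynomial ring over a field K, let S' = K[x_1,...,x_r] and S'' = K[x_{r+1},...,x_n] with 1 < r < n, and let I ⊆ S' and J ⊆ S'' be monomial ideals. Then depth_S(IS ∩ JS) = depth_{S'}(I) + depth_{S''}(J). -/
open MvPolynomial

/-- The depth of a module `M` with respect to an ideal `I`: the supremum of
lengths of `M`-regular sequences with entries in `I`. -/
noncomputable def moduleDepth (R : Type*) [CommRing R] (I : Ideal R)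
    (M : Type*) [AddCommGroup M] [Module R M] : ℕ :=
  sSup {k | ∃ rs : List R, rs.length = k ∧ (∀ r ∈ rs, r ∈ I) ∧
    RingTheory.Sequence.IsRegular M rs}

/-- The Stanley space `u·K[Z]`: the `K`-span of all monomials `u·v` with
`v` a monomial in the variables of `Z`. -/
noncomputable def stanleySpace {n : ℕ} (K : Type*) [Field K] (d : Fin n →₀ ℕ)
    (Z : Finset (Fin n)) : Submodule K (MvPolynomial (Fin n) K) :=
  Submodule.span K {f | ∃ e : Fin n →₀ ℕ, (∀ i, e i ≠ 0 → i ∈ Z) ∧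
    f = monomial (d + e) (1 : K)}

/-- A Stanley decomposition of a monomial ideal `I`: a finite family of Stanley
spaces `uᵢ·K[Zᵢ]`, with each `uᵢ ∈ I`, which are independent and whose (direct)
sum is `I` as a `K`-vector space. -/
structure StanleyDecomp {n : ℕ} (K : Type*) [Field K]
    (I : Ideal (MvPolynomial (Fin n) K)) where
  m : ℕ
  u : Fin m → (Fin n →₀ ℕ)
  Z : Fin m → Finset (Fin n)
  mem : ∀ i, monomial (u i) (1 : K) ∈ I
  indep : iSupIndep fun i => stanleySpace K (u i) (Z i)
  total : (⨆ i, stanleySpace K (u i) (Z i)) = Submodule.restrictScalars K I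

/-- The Stanley depth of a monomial ideal: the largest `k` such that `I` admits a
Stanley decomposition all of whose Stanley spaces use at least `k` variables. -/
noncomputable def sdepth {n : ℕ} {K : Type*} [Field K]
    (I : Ideal (MvPolynomial (Fin n) K)) : ℕ :=
  sSup {k | ∃ D : StanleyDecomp K I, ∀ i, k ≤ (D.Z i).card}

/-- `I` is a monomial ideal if it is generated by monomials. -/
def IsMonomialIdeal {n : ℕ} {K : Type*} [Field K]
    (I : Ideal (MvPolynomial (Fin n) K)) : Prop :=
  ∃ G : Set (Fin n →₀ ℕ), I = Ideal.span ((fun d => monomial d (1 : K)) '' G)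

/-- The monomial prime ideal generated by the variables in `A`. -/
noncomputable def varIdeal {n : ℕ} (K : Type*) [Field K] (A : Finset (Fin n)) :
    Ideal (MvPolynomial (Fin n) K) :=
  Ideal.span ((fun i => (X i : MvPolynomial (Fin n) K)) '' ↑A)

/-- The graded maximal ideal `(x_1, …, x_n)`. -/
noncomputable def maxIdeal (n : ℕ) (K : Type*) [Field K] :
    Ideal (MvPolynomial (Fin n) K) :=
  varIdeal K Finset.univ

universe u
open Pointwise CategoryTheory Abelian Limits RingTheory.Sequence TensorProduct

def HasD {R : Type u} [CommRing R] (m : Ideal R) :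
    ℕ → (M : Type u) → [AddCommGroup M] → [Module R M] → Prop
  | 0, M, _, _ => ∃ u : M, u ≠ 0 ∧ ∀ x ∈ m, x • u = 0
  | k + 1, M, _, _ => ∃ x ∈ m, IsSMulRegular M x ∧ HasD m k (QuotSMulTop x M)

lemma HasD.exists_regular {R : Type u} [CommRing R] (m : Ideal R) (k : ℕ) :
    ∀ (M : Type u) [AddCommGroup M] [Module R M], HasD m k M →
    ∃ rs : List R, rs.length = k ∧ (∀ r ∈ rs, r ∈ m) ∧ IsRegular M rs := by
  induction k with
  | zero =>
    rintro M _ _ ⟨u, hu, -⟩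
    have : Nontrivial M := ⟨u, 0, hu⟩
    exact ⟨[], rfl, by simp, IsRegular.nil R M⟩
  | succ k ih =>
    rintro M _ _ ⟨x, hx, hreg, h⟩
    obtain ⟨rs, h1, h2, h3⟩ := ih _ h
    exact ⟨x :: rs, by simp [h1], by simpa [hx] using h2, IsRegular.cons hreg h3⟩

lemma HasD.not_ext {R : Type u} [CommRing R] (m : Ideal R) (k : ℕ) :
    ∀ (M : Type u) [AddCommGroup M] [Module R M], HasD m k M →
    ¬ ∀ i ≤ k, Subsingleton (Ext (ModuleCat.of R (R ⧸ m)) (ModuleCat.of R M) i) := by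
  induction k with
  | zero =>
    rintro M _ _ ⟨u, hu, hm⟩ h
    have := h 0 le_rfl
    have : Subsingleton (ModuleCat.of R (R ⧸ m) ⟶ ModuleCat.of R M) :=
      Ext.addEquiv₀.subsingleton_congr.mp this
    have h3 : Subsingleton ((R ⧸ m) →ₗ[R] M) :=
      (ModuleCat.homAddEquiv (M := ModuleCat.of R (R ⧸ m)) (N := ModuleCat.of R M)).symm.subsingleton
    let f : (R ⧸ m) →ₗ[R] M := Submodule.liftQ m (LinearMap.toSpanSingleton R M u) (by
      intro x hx
      simpa using hm x hx)
    have : f (Submodule.Quotient.mk 1) = u := by simp [f, -Ideal.Quotient.mk_eq_mk]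
    apply hu
    rw [← this, Subsingleton.elim f 0]
    rfl
  | succ k ih =>
    rintro M _ _ ⟨x, hx, hreg, h⟩ h2
    refine ih _ h fun i hi => ?_
    have hreg' : IsSMulRegular (ModuleCat.of R M) x := hreg
    have zero1 := AddCommGrpCat.isZero_of_iff_subsingleton.mpr (h2 i (by omega))
    have zero2 := AddCommGrpCat.isZero_of_iff_subsingleton.mpr (h2 (i + 1) (by omega))
    exact AddCommGrpCat.subsingleton_of_isZero <| ShortComplex.Exact.isZero_of_both_zeros
        ((Ext.covariant_sequence_exact₃' _ hreg'.smulShortComplex_shortExact) i (i + 1) rfl)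
        (zero1.eq_zero_of_src _) (zero2.eq_zero_of_tgt _)

lemma HasD.exists {R : Type u} [CommRing R] [IsNoetherianRing R] (m : Ideal R)
    (M : Type u) [AddCommGroup M] [Module R M] [Module.Finite R M] 
    (hm : m • (⊤ : Submodule R M) ≠ ⊤) : ∃ k, HasD m k M := by
  suffices H : ∀ N : Submodule R M, ∀ (M' : Type u) [AddCommGroup M'] [Module R M']
      (f : M →ₗ[R] M'), Function.Surjective f → LinearMap.ker f = N →
      m • (⊤ : Submodule R M') ≠ ⊤ → ∃ k, HasD m k M' from
    H _ M LinearMap.id Function.surjective_id rfl hm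
  intro N
  induction N using WellFoundedGT.induction with
  | _ N ih =>
  intro M' _ _ f hf hN hm'
  have : Module.Finite R M' := Module.Finite.of_surjective f hf
  have hnt : Nontrivial M' := by
    by_contra h
    rw [not_nontrivial_iff_subsingleton] at h
    exact hm' (Subsingleton.elim _ _)
  by_cases hx : ∃ x ∈ m, IsSMulRegular M' x
  · obtain ⟨x, hx, hreg⟩ := hx
    have h1 : N < LinearMap.ker ((Submodule.mkQ (x • (⊤ : Submodule R M'))) ∘ₗ f) := by
      rw [SetLike.lt_iff_le_and_exists]
      obtain ⟨u, hu⟩ := exists_ne (0 : M')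
      obtain ⟨v, rfl⟩ := hf u
      refine ⟨?_, x • v, ?_, ?_⟩
      · rw [← hN]; exact LinearMap.ker_le_ker_comp _ _
      · rw [LinearMap.mem_ker, LinearMap.comp_apply, Submodule.mkQ_apply, map_smul,
          Submodule.Quotient.mk_eq_zero]
        exact Submodule.smul_mem_pointwise_smul _ _ _ trivial
      · rw [← hN, LinearMap.mem_ker, map_smul]
        intro h
        exact hu (hreg (by simpa using h))
    have h2 : m • (⊤ : Submodule R (QuotSMulTop x M')) ≠ ⊤ := by
      intro eq
      absurd congrArg (Submodule.comap (Submodule.mkQ _)) eq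
      simpa [Submodule.comap_smul_top_of_surjective m _ (Submodule.mkQ_surjective _),
        Submodule.smul_mono_left ((Ideal.span_singleton_le_iff_mem m).mpr hx),
        ← Submodule.ideal_span_singleton_smul] using hm'
    obtain ⟨k, hk⟩ := ih _ h1
      (QuotSMulTop x M') (Submodule.mkQ (x • (⊤ : Submodule R M')) ∘ₗ f)
      ((Submodule.mkQ_surjective _).comp hf) rfl h2
    exact ⟨k + 1, x, hx, hreg, hk⟩
  · refine ⟨0, ?_⟩
    have h := (IsSMulRegular.subsingleton_linearMap_iff (R := R) (M := M') (N := R ⧸ m)).not.mpr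
      (by rwa [Ideal.annihilator_quotient])
    rw [not_subsingleton_iff_nontrivial] at h
    obtain ⟨g, hg⟩ := exists_ne (0 : (R ⧸ m) →ₗ[R] M')
    refine ⟨g 1, fun h0 => hg ?_, fun x hx => ?_⟩
    · apply LinearMap.ext
      intro y
      obtain ⟨y, rfl⟩ := Ideal.Quotient.mk_surjective y
      have : Ideal.Quotient.mk m y = y • (1 : R ⧸ m) := by
        rw [← Algebra.algebraMap_eq_smul_one]; rfl
      rw [this, map_smul, h0]; simp
    · rw [← map_smul, ← Algebra.algebraMap_eq_smul_one]
      have : algebraMap R (R ⧸ m) x = 0 := Ideal.Quotient.eq_zero_iff_mem.mpr hx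
      rw [this, map_zero]

set_option linter.unusedSectionVars false
section
variable {K A B S : Type u} [Field K] [CommRing A] [CommRing B] [CommRing S] [Algebra K A]
  [Algebra K B] [Algebra K S]

def Compat (K : Type u) {A B S : Type u} [Field K] [CommRing A] [CommRing B] [CommRing S]
    [Algebra K A] [Algebra K B] [Algebra K S]
    (i : A → S) (j : B → S) (P Q M : Type u) [AddCommGroup P] [AddCommGroup Q]
    [AddCommGroup M] [Module A P] [Module B Q] [Module S M] [Module K P] [Module K Q] [Module K M]
    [IsScalarTower K A P] [IsScalarTower K B Q] : Prop :=
  ∃ ψ : M ≃ₗ[K] P ⊗[K] Q,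
    (∀ a x, ψ (i a • x) = LinearMap.rTensor Q (Algebra.lsmul K K P a) (ψ x)) ∧
    (∀ b x, ψ (j b • x) = LinearMap.lTensor P (Algebra.lsmul K K Q b) (ψ x))

variable {i : A → S} {j : B → S} {P Q M : Type u} [AddCommGroup P] [AddCommGroup Q]
    [AddCommGroup M] [Module A P] [Module B Q] [Module S M] [Module K P] [Module K Q] [Module K M]
    [IsScalarTower K A P] [IsScalarTower K B Q] [IsScalarTower K S M]

lemma Compat.swap (h : Compat K i j P Q M) : Compat K j i Q P M := by
  obtain ⟨ψ, h1, h2⟩ := h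
  refine ⟨ψ.trans (TensorProduct.comm K P Q), fun a x => ?_, fun a x => ?_⟩
  · simp only [LinearEquiv.trans_apply, h2]
    generalize ψ x = t
    induction t <;> simp_all
  · simp only [LinearEquiv.trans_apply, h1]
    generalize ψ x = t
    induction t <;> simp_all

lemma Compat.reg (h : Compat K i j P Q M) {a : A} (ha : IsSMulRegular P a) :
    IsSMulRegular M (i a) := by
  obtain ⟨ψ, h1, h2⟩ := h
  intro x y hxy
  have := congrArg ψ hxy
  simp only [h1] at this
  exact ψ.injective (Module.Flat.rTensor_preserves_injective_linearMap (M := Q)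
    (Algebra.lsmul K K P a) ha this)

set_option maxHeartbeats 1000000 in
lemma Compat.quot (h : Compat K i j P Q M) (a : A) :
    Compat K i j (QuotSMulTop a P) Q (QuotSMulTop (i a) M) := by
  obtain ⟨ψ, h1, h2⟩ := h
  let π : P →ₗ[K] QuotSMulTop a P := (Submodule.mkQ (a • (⊤ : Submodule A P))).restrictScalars K
  have hπ : Function.Surjective π := Submodule.mkQ_surjective _
  let g : M →ₗ[K] (QuotSMulTop a P) ⊗[K] Q := LinearMap.rTensor Q π ∘ₗ ψ.toLinearMap
  have hg : Function.Surjective g := (LinearMap.rTensor_surjective Q hπ).comp ψ.surjective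
  have hex : Function.Exact (Algebra.lsmul K K P a) π := by
    intro x
    have : π x = 0 ↔ x ∈ (a • (⊤ : Submodule A P)) := Submodule.Quotient.mk_eq_zero _
    rw [this, Submodule.mem_smul_pointwise_iff_exists]
    simp
  have hker : LinearMap.ker g = ((i a) • (⊤ : Submodule S M)).restrictScalars K := by
    ext x
    have := rTensor_exact Q hex hπ (ψ x)
    rw [LinearMap.mem_ker, Submodule.restrictScalars_mem, Submodule.mem_smul_pointwise_iff_exists]
    refine this.trans ⟨?_, ?_⟩
    · rintro ⟨t, ht⟩
      refine ⟨ψ.symm t, trivial, ψ.injective ?_⟩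
      rw [h1, ψ.apply_symm_apply, ht]
    · rintro ⟨t, -, rfl⟩
      exact ⟨ψ t, (h1 _ _).symm⟩
  obtain ⟨e, he⟩ : ∃ e : QuotSMulTop (i a) M ≃ₗ[K] (QuotSMulTop a P) ⊗[K] Q,
      ∀ x : M, e (Submodule.Quotient.mk x) = LinearMap.rTensor Q π (ψ x) := by
    refine ⟨((Submodule.Quotient.restrictScalarsEquiv K ((i a) • (⊤ : Submodule S M))).symm.trans
      (Submodule.quotEquivOfEq _ _ hker.symm)).trans (g.quotKerEquivOfSurjective hg), ?_⟩
    intro x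
    simp only [LinearEquiv.trans_apply, Submodule.Quotient.restrictScalarsEquiv_symm_mk, Submodule.quotEquivOfEq_mk]
    exact g.quotKerEquivOfSurjective_apply_mk hg x
  refine ⟨e, fun c x => ?_, fun c x => ?_⟩
  · obtain ⟨x, rfl⟩ := Submodule.Quotient.mk_surjective _ x
    rw [← Submodule.Quotient.mk_smul, he, he, h1]
    generalize ψ x = t
    induction t with
    | zero => simp
    | add s t hs ht => rw [map_add, map_add, hs, ht, map_add, map_add]
    | tmul p q => rfl
  · obtain ⟨x, rfl⟩ := Submodule.Quotient.mk_surjective _ x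
    rw [← Submodule.Quotient.mk_smul, he, he, h2]
    generalize ψ x = t
    induction t with
    | zero => simp
    | add s t hs ht => rw [map_add, map_add, hs, ht, map_add, map_add]
    | tmul p q => rfl
end

lemma Compat.hasD {K A B S : Type u} [Field K] [CommRing A] [CommRing B] [CommRing S] [Algebra K A]
    [Algebra K B] [Algebra K S] (i : A →+* S) (j : B →+* S) (mA : Ideal A) (mB : Ideal B)
    (mS : Ideal S) (hmA : ∀ a ∈ mA, i a ∈ mS) (hmB : ∀ b ∈ mB, j b ∈ mS)
    (hmS : mS ≤ mA.map i ⊔ mB.map j) (a : ℕ) : ∀ (b : ℕ)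
    (P Q M : Type u) [AddCommGroup P] [AddCommGroup Q]
    [AddCommGroup M] [Module A P] [Module B Q] [Module S M] [Module K P] [Module K Q] [Module K M]
    [IsScalarTower K A P] [IsScalarTower K B Q] [IsScalarTower K S M], Compat K i j P Q M → 
    HasD mA a P → HasD mB b Q → HasD mS (b + a) M := by
  induction a with
  | zero =>
    intro b
    induction b with
    | zero =>
      rintro P Q M _ _ _ _ _ _ _ _ _ _ _ _ ⟨ψ, h1, h2⟩ ⟨u, hu, hu'⟩ ⟨v, hv, hv'⟩
      refine ⟨ψ.symm (u ⊗ₜ v), ?_, ?_⟩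
      · rw [ne_eq, LinearEquiv.map_eq_zero_iff]
        intro h0
        have hinj := Module.Flat.rTensor_preserves_injective_linearMap (M := Q)
          (LinearMap.toSpanSingleton K P u) (by
            rw [← LinearMap.ker_eq_bot, LinearMap.ker_toSpanSingleton _ hu])
        have h3 : (1 : K) ⊗ₜ[K] v = 0 := hinj (by simpa using h0)
        apply hv
        simpa using congrArg (TensorProduct.lid K Q) h3
      · intro x hx
        have : mA.map i ⊔ mB.map j ≤ LinearMap.ker (LinearMap.toSpanSingleton S M (ψ.symm (u ⊗ₜ v))) := by
          rw [sup_le_iff, Ideal.map_le_iff_le_comap, Ideal.map_le_iff_le_comap]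
          constructor
          · intro a ha
            simp only [Ideal.mem_comap, LinearMap.mem_ker, LinearMap.toSpanSingleton_apply]
            apply ψ.injective
            rw [h1]
            simp [hu' a ha]
          · intro a ha
            simp only [Ideal.mem_comap, LinearMap.mem_ker, LinearMap.toSpanSingleton_apply]
            apply ψ.injective
            rw [h2]
            simp [hv' a ha]
        simpa using this (hmS hx)
    | succ b ih =>
      rintro P Q M _ _ _ _ _ _ _ _ _ _ _ _ h hP ⟨x, hx, hreg, hQ⟩
      refine ⟨j x, hmB x hx, h.swap.reg hreg, ih _ _ _ (h.swap.quot x).swap hP hQ⟩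
  | succ a ih =>
      rintro b P Q M _ _ _ _ _ _ _ _ _ _ _ _ h ⟨x, hx, hreg, hP⟩ hQ
      refine ⟨i x, hmA x hx, h.reg hreg, ih b _ _ _ (h.quot x) hP hQ⟩

lemma moduleDepth_eq {R : Type u} [CommRing R] [IsNoetherianRing R] (m : Ideal R)
    (M : Type u) [AddCommGroup M] [Module R M] [Module.Finite R M]
    (hm : m • (⊤ : Submodule R M) ≠ ⊤) {k : ℕ} (hk : HasD m k M) : moduleDepth R m M = k := by
  have hgr : IsGreatest {k | ∃ rs : List R, rs.length = k ∧ (∀ r ∈ rs, r ∈ m) ∧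
      RingTheory.Sequence.IsRegular M rs} k := by
    refine ⟨hk.exists_regular, ?_⟩
    rintro n ⟨rs, rfl, hrs, hreg⟩
    by_contra hlt
    push Not at hlt
    refine hk.not_ext m k M fun i hi => ?_
    refine ModuleCat.subsingleton_ext_of_exists_isRegular m (ModuleCat.of R (R ⧸ m)) ?_
      (ModuleCat.of R M) (lt_top_iff_ne_top.mpr hm) rs hrs hreg i (by omega)
    change Module.support R (R ⧸ m) ⊆ _
    rw [Module.support_eq_zeroLocus, Ideal.annihilator_quotient]
  exact hgr.csSup_eq

lemma smul_ideal_ne_top {R : Type u} [CommRing R] [IsDomain R] [IsNoetherianRing R] (m : Ideal R)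
    (hm : m ≠ ⊤) (I : Ideal R) (hI : I ≠ ⊥) : m • (⊤ : Submodule R I) ≠ ⊤ := by
  intro h
  obtain ⟨r, hr, h0⟩ := Submodule.exists_sub_one_mem_and_smul_eq_zero_of_fg_of_le_smul m
    (⊤ : Submodule R I) Module.Finite.fg_top h.ge
  obtain ⟨x, hx, hx0⟩ := Submodule.exists_mem_ne_zero_of_ne_bot hI
  have := congrArg Subtype.val (h0 ⟨x, hx⟩ trivial)
  have hr0 : r = 0 := by simpa [hx0] using this
  apply hm
  rw [Ideal.eq_top_iff_one]
  subst hr0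
  simpa using hr

lemma maxIdeal_ne_top (n : ℕ) (K : Type u) [Field K] : maxIdeal n K ≠ ⊤ := by
  intro h
  have : maxIdeal n K ≤ RingHom.ker (MvPolynomial.constantCoeff (σ := Fin n) (R := K)) := by
    rw [maxIdeal, varIdeal, Ideal.span_le]
    rintro _ ⟨i, -, rfl⟩
    simp
  rw [h] at this
  have h1 := this (Submodule.mem_top (x := 1))
  simp at h1

lemma X_mem_maxIdeal (n : ℕ) (K : Type u) [Field K] (i : Fin n) :
    (MvPolynomial.X i : MvPolynomial (Fin n) K) ∈ maxIdeal n K :=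
  Ideal.subset_span ⟨i, by simp, rfl⟩

lemma maxIdeal_le {n : ℕ} {K : Type u} [Field K] {I : Ideal (MvPolynomial (Fin n) K)}
    (h : ∀ i, MvPolynomial.X i ∈ I) : maxIdeal n K ≤ I := by
  rw [maxIdeal, varIdeal, Ideal.span_le]
  rintro _ ⟨i, -, rfl⟩
  exact h i

lemma exists_tensor_equiv (K : Type u) [Field K] (r m : ℕ) :
    ∃ e : MvPolynomial (Fin r) K ⊗[K] MvPolynomial (Fin m) K ≃ₐ[K] MvPolynomial (Fin (r + m)) K,
      ∀ a b, e (a ⊗ₜ b) = rename (Fin.castAdd m) a * rename (Fin.natAdd r) b := by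
  let e := (tensorEquivSum K (Fin r) (Fin m) K).trans (renameEquiv K finSumFinEquiv)
  refine ⟨e, fun a b => ?_⟩
  have h1 : e.toAlgHom.comp Algebra.TensorProduct.includeLeft = rename (Fin.castAdd m) := by
    ext i : 1
    simp [e]
  have h2 : e.toAlgHom.comp Algebra.TensorProduct.includeRight = rename (Fin.natAdd r) := by
    ext i : 1
    simp [e]
  rw [← h1, ← h2]
  simp [← map_mul]

lemma compat_inter {K A B S : Type u} [Field K] [CommRing A] [CommRing B] [CommRing S]
    [Algebra K A] [Algebra K B] [Algebra K S] (i : A →ₐ[K] S) (j : B →ₐ[K] S)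
    (e : A ⊗[K] B ≃ₐ[K] S) (he : ∀ a b, e (a ⊗ₜ b) = i a * j b) (I : Ideal A) (J : Ideal B) :
    Compat K i j I J ↥(I.map i ⊓ J.map j) := by
  let sI : I →ₗ[K] A := I.subtype.restrictScalars K
  let sJ : J →ₗ[K] B := J.subtype.restrictScalars K
  obtain ⟨pI, hpI⟩ := LinearMap.exists_leftInverse_of_injective sI
    (LinearMap.ker_eq_bot.mpr Subtype.val_injective)
  obtain ⟨pJ, hpJ⟩ := LinearMap.exists_leftInverse_of_injective sJ
    (LinearMap.ker_eq_bot.mpr Subtype.val_injective)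
  have hpI' : ∀ x : I, pI x = x := fun x => LinearMap.congr_fun hpI x
  have hpJ' : ∀ x : J, pJ x = x := fun x => LinearMap.congr_fun hpJ x
  have hfixI : ∀ x ∈ I.map i, LinearMap.rTensor B (sI ∘ₗ pI) (e.symm x) = e.symm x := by
    intro x hx
    rw [Ideal.map] at hx
    induction hx using Submodule.closure_induction with
    | zero => simp
    | add x y _ _ hx hy => simp only [map_add, hx, hy]
    | smul_mem s x hx =>
      obtain ⟨a, ha, rfl⟩ := hx
      have h1 : e.symm (i a) = a ⊗ₜ 1 := by rw [AlgEquiv.symm_apply_eq, he]; simp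
      obtain ⟨w, rfl⟩ := e.surjective s
      rw [smul_eq_mul, map_mul, AlgEquiv.symm_apply_apply]
      erw [h1]
      induction w with
      | zero => simp
      | add x y hx hy => rw [add_mul, map_add, hx, hy]
      | tmul c d =>
        rw [Algebra.TensorProduct.tmul_mul_tmul, LinearMap.rTensor_tmul, LinearMap.comp_apply,
          hpI' ⟨c * a, I.mul_mem_left c ha⟩]
        rfl
  have hfixJ : ∀ x ∈ J.map j, LinearMap.lTensor A (sJ ∘ₗ pJ) (e.symm x) = e.symm x := by
    intro x hx
    rw [Ideal.map] at hx
    induction hx using Submodule.closure_induction with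
    | zero => simp
    | add x y _ _ hx hy => simp only [map_add, hx, hy]
    | smul_mem s x hx =>
      obtain ⟨a, ha, rfl⟩ := hx
      have h1 : e.symm (j a) = 1 ⊗ₜ a := by rw [AlgEquiv.symm_apply_eq, he]; simp
      obtain ⟨w, rfl⟩ := e.surjective s
      rw [smul_eq_mul, map_mul, AlgEquiv.symm_apply_apply]
      erw [h1]
      induction w with
      | zero => simp
      | add x y hx hy => rw [add_mul, map_add, hx, hy]
      | tmul c d =>
        rw [Algebra.TensorProduct.tmul_mul_tmul, LinearMap.lTensor_tmul, LinearMap.comp_apply,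
          hpJ' ⟨d * a, J.mul_mem_left d ha⟩]
        rfl
  let φ : I ⊗[K] J →ₗ[K] S := e.toLinearMap ∘ₗ TensorProduct.map sI sJ
  have hφ : ∀ (p : I) (q : J), φ (p ⊗ₜ q) = i p * j q := fun p q => he p q
  have hmem : ∀ t, φ t ∈ I.map i ⊓ J.map j := by
    intro t
    induction t with
    | zero => rw [map_zero]; exact zero_mem _
    | add x y hx hy => rw [map_add]; exact add_mem hx hy
    | tmul p q =>
      rw [hφ]
      exact ⟨Ideal.mul_mem_right _ _ (Ideal.mem_map_of_mem _ p.2),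
        Ideal.mul_mem_left _ _ (Ideal.mem_map_of_mem _ q.2)⟩
  let φ' : I ⊗[K] J →ₗ[K] ↥(I.map i ⊓ J.map j) :=
    { toFun := fun t => ⟨φ t, hmem t⟩
      map_add' := fun x y => Subtype.ext (map_add φ x y)
      map_smul' := fun c x => Subtype.ext (map_smul φ c x) }
  have hbij : Function.Bijective φ' := by
    constructor
    · intro x y hxy
      have h1 : φ x = φ y := congrArg Subtype.val hxy
      have h2 : TensorProduct.map sI sJ x = TensorProduct.map sI sJ y := e.injective h1
      have h3 : TensorProduct.map pI pJ ∘ₗ TensorProduct.map sI sJ = LinearMap.id := by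
        rw [← TensorProduct.map_comp, hpI, hpJ, TensorProduct.map_id]
      have h4 := congrArg (TensorProduct.map pI pJ) h2
      rw [← LinearMap.comp_apply, ← LinearMap.comp_apply, h3] at h4
      exact h4
    · rintro ⟨x, hxI, hxJ⟩
      refine ⟨TensorProduct.map pI pJ (e.symm x), Subtype.ext ?_⟩
      change e (TensorProduct.map sI sJ (TensorProduct.map pI pJ (e.symm x))) = x
      rw [← LinearMap.comp_apply, ← TensorProduct.map_comp, ← LinearMap.rTensor_comp_lTensor,
        LinearMap.comp_apply, hfixJ x hxJ, hfixI x hxI, AlgEquiv.apply_symm_apply]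
  let Φ := LinearEquiv.ofBijective φ' hbij
  have hA : ∀ (a : A) t, Φ (LinearMap.rTensor J (Algebra.lsmul K K I a) t) = i a • Φ t := by
    intro a t
    apply Subtype.ext
    change φ _ = i a * φ t
    induction t with
    | zero => simp
    | add x y hx hy => rw [map_add, map_add, hx, hy, map_add, mul_add]
    | tmul p q =>
      rw [LinearMap.rTensor_tmul, hφ, hφ, ← mul_assoc, ← map_mul]
      rfl
  have hB : ∀ (b : B) t, Φ (LinearMap.lTensor I (Algebra.lsmul K K J b) t) = j b • Φ t := by
    intro a t
    apply Subtype.ext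
    change φ _ = j a * φ t
    induction t with
    | zero => simp
    | add x y hx hy => rw [map_add, map_add, hx, hy, map_add, mul_add]
    | tmul p q =>
      rw [LinearMap.lTensor_tmul, hφ, hφ, mul_left_comm, ← map_mul]
      rfl
  refine ⟨Φ.symm, fun a x => ?_, fun b x => ?_⟩
  · rw [LinearEquiv.symm_apply_eq, hA, LinearEquiv.apply_symm_apply]
  · rw [LinearEquiv.symm_apply_eq, hB, LinearEquiv.apply_symm_apply]


/-- depth of the intersection of extensions of monomial ideals in
disjoint sets of variables (writing `n = r + m` with `1 < r` and `0 < m`). -/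
theorem depth_inter_of_disjoint_vars {K : Type*} [Field K] (r m : ℕ)
    (hr : 1 < r) (hm : 0 < m)
    (I : Ideal (MvPolynomial (Fin r) K)) (J : Ideal (MvPolynomial (Fin m) K))
    (hImon : IsMonomialIdeal I) (hJmon : IsMonomialIdeal J)
    (hI0 : I ≠ ⊥) (hJ0 : J ≠ ⊥) :
    moduleDepth (MvPolynomial (Fin (r + m)) K) (maxIdeal (r + m) K)
      ↥(Ideal.map (rename (Fin.castAdd m) :
            MvPolynomial (Fin r) K →ₐ[K] MvPolynomial (Fin (r + m)) K) I ⊓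
        Ideal.map (rename (Fin.natAdd r) :
            MvPolynomial (Fin m) K →ₐ[K] MvPolynomial (Fin (r + m)) K) J) =
      moduleDepth (MvPolynomial (Fin r) K) (maxIdeal r K) ↥I +
        moduleDepth (MvPolynomial (Fin m) K) (maxIdeal m K) ↥J := by
  obtain ⟨e, he⟩ := exists_tensor_equiv K r m
  set i : MvPolynomial (Fin r) K →ₐ[K] MvPolynomial (Fin (r + m)) K := rename (Fin.castAdd m)
    with hi
  set j : MvPolynomial (Fin m) K →ₐ[K] MvPolynomial (Fin (r + m)) K := rename (Fin.natAdd r)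
    with hj
  have hIm := smul_ideal_ne_top _ (maxIdeal_ne_top r K) I hI0
  have hJm := smul_ideal_ne_top _ (maxIdeal_ne_top m K) J hJ0
  obtain ⟨a, ha⟩ := HasD.exists (maxIdeal r K) I hIm
  obtain ⟨b, hb⟩ := HasD.exists (maxIdeal m K) J hJm
  have hM0 : I.map i ⊓ J.map j ≠ ⊥ := by
    obtain ⟨x, hx, hx0⟩ := Submodule.exists_mem_ne_zero_of_ne_bot hI0
    obtain ⟨y, hy, hy0⟩ := Submodule.exists_mem_ne_zero_of_ne_bot hJ0
    have hmem : i x * j y ∈ I.map i ⊓ J.map j :=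
      ⟨Ideal.mul_mem_right _ _ (Ideal.mem_map_of_mem _ hx),
        Ideal.mul_mem_left _ _ (Ideal.mem_map_of_mem _ hy)⟩
    have hi0 : i x ≠ 0 :=
      (map_ne_zero_iff i (rename_injective _ (Fin.castAdd_injective r m))).mpr hx0
    have hj0 : j y ≠ 0 :=
      (map_ne_zero_iff j (rename_injective _ (Fin.natAdd_injective m r))).mpr hy0
    intro h
    rw [h] at hmem
    exact mul_ne_zero hi0 hj0 hmem
  have hMm := smul_ideal_ne_top _ (maxIdeal_ne_top (r + m) K) _ hM0
  have hD := Compat.hasD (K := K) i.toRingHom j.toRingHom (maxIdeal r K) (maxIdeal m K)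
    (maxIdeal (r + m) K) ?_ ?_ ?_ a b I J ↥(I.map i ⊓ J.map j) (compat_inter i j e he I J) ha hb
  · rw [moduleDepth_eq _ _ hIm ha, moduleDepth_eq _ _ hJm hb, moduleDepth_eq _ _ hMm hD, add_comm]
  · intro x hx
    have h : maxIdeal r K ≤ (maxIdeal (r + m) K).comap i.toRingHom :=
      maxIdeal_le fun k => by
        rw [Ideal.mem_comap]
        have : i.toRingHom (X k) = X (Fin.castAdd m k) := rename_X _ _
        rw [this]
        exact X_mem_maxIdeal _ _ _
    exact h hx
  · intro x hx
    have h : maxIdeal m K ≤ (maxIdeal (r + m) K).comap j.toRingHom :=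
      maxIdeal_le fun k => by
        rw [Ideal.mem_comap]
        have : j.toRingHom (X k) = X (Fin.natAdd r k) := rename_X _ _
        rw [this]
        exact X_mem_maxIdeal _ _ _
    exact h hx
  · apply maxIdeal_le
    intro k
    induction k using Fin.addCases with
    | left k =>
      have : i.toRingHom (X k) = X (Fin.castAdd m k) := rename_X _ _
      rw [← this]
      exact Ideal.mem_sup_left (Ideal.mem_map_of_mem _ (X_mem_maxIdeal _ _ _))
    | right k =>
      have : j.toRingHom (X k) = X (Fin.natAdd r k) := rename_X _ _
      rw [← this]
      exact Ideal.mem_sup_right (Ideal.mem_map_of_mem _ (X_mem_maxIdeal _ _ _))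
end

section
/- Let 0 = r_0 < r_1 < ... < r_s = n, S = K[x_1,...,x_n], and P_i = (x_{r_{i-1}+1},...,x_{r_i}) for i = 1,...,s. Set I = P_1 ∩ ... ∩ P_s. Then depth_S(I) = s. -/
open MvPolynomial

universe u

open CategoryTheory Abelian RingTheory.Sequence in
lemma ext_vanish_hom {R : Type u} [CommRing R] (N : ModuleCat.{u} R) (rs : List R) :
    ∀ (M : ModuleCat.{u} R), IsWeaklyRegular M rs →
    (∀ i ≤ rs.length, Subsingleton (Ext N M i)) →
    Subsingleton (N →ₗ[R] (M ⧸ (Ideal.ofList rs • ⊤ : Submodule R M))) := by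
  induction rs with
  | nil =>
    intro M _ h
    have h0 := h 0 le_rfl
    have h1 : Subsingleton (N →ₗ[R] M) :=
      (Ext.addEquiv₀.trans ModuleCat.homAddEquiv).symm.subsingleton
    have e : (M ⧸ (Ideal.ofList ([] : List R) • ⊤ : Submodule R M)) ≃ₗ[R] M :=
      Submodule.quotEquivOfEqBot _ (by rw [Ideal.ofList_nil, Submodule.bot_smul])
    exact (LinearEquiv.congrRight (M := N) e).toEquiv.subsingleton
  | cons r rs ih =>
    intro M reg h
    rw [isWeaklyRegular_cons_iff] at reg
    have h' : ∀ i ≤ rs.length, Subsingleton (Ext N (ModuleCat.of R (QuotSMulTop r M)) i) := by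
      intro i hi
      have zero1 := AddCommGrpCat.isZero_of_iff_subsingleton.mpr (h i (by simp; omega))
      have zero2 := AddCommGrpCat.isZero_of_iff_subsingleton.mpr (h (i + 1) (by simp; omega))
      exact AddCommGrpCat.subsingleton_of_isZero <| ShortComplex.Exact.isZero_of_both_zeros
        ((Ext.covariant_sequence_exact₃' N reg.1.smulShortComplex_shortExact) i (i + 1) rfl)
        (zero1.eq_zero_of_src _) (zero2.eq_zero_of_tgt _)
    have := ih (ModuleCat.of R (QuotSMulTop r M)) reg.2 h'
    exact (LinearEquiv.congrRight (M := N)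
      (Submodule.quotOfListConsSMulTopEquivQuotSMulTopInner M r rs)).toEquiv.subsingleton

open CategoryTheory Abelian RingTheory.Sequence in
lemma depth_eq_of_socle {R : Type u} [CommRing R] [IsNoetherianRing R] (I : Ideal R)
    (M : Type u) [AddCommGroup M] [Module R M] [Module.Finite R M]
    (rs : List R) (mem : ∀ r ∈ rs, r ∈ I) (reg : IsWeaklyRegular M rs)
    (w : M) (hw : w ∉ (I • ⊤ : Submodule R M))
    (hsoc : ∀ a ∈ I, a • w ∈ (Ideal.ofList rs • ⊤ : Submodule R M)) :
    moduleDepth R I M = rs.length := by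
  have smul_lt : (I • ⊤ : Submodule R M) < ⊤ := by
    rw [lt_top_iff_ne_top]
    intro h
    exact hw (by rw [h]; exact Submodule.mem_top)
  have hle : Ideal.ofList rs ≤ I := Ideal.span_le.mpr (fun r hr => mem r hr)
  have hw' : w ∉ (Ideal.ofList rs • ⊤ : Submodule R M) :=
    fun h => hw (Submodule.smul_mono_left hle h)
  apply IsGreatest.csSup_eq
  refine ⟨⟨rs, rfl, mem, reg, fun h => hw' (h ▸ Submodule.mem_top)⟩, ?_⟩
  rintro k ⟨ts, rfl, tmem, treg⟩
  by_contra! hlt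
  have hext := ModuleCat.subsingleton_ext_of_exists_isRegular I (ModuleCat.of R (R ⧸ I))
    (by
      rw [Module.support_eq_zeroLocus]
      change PrimeSpectrum.zeroLocus (Module.annihilator R (R ⧸ I) : Set R) ⊆ _
      rw [Ideal.annihilator_quotient]) (ModuleCat.of R M) smul_lt ts tmem treg
  have hs := ext_vanish_hom (ModuleCat.of R (R ⧸ I)) rs (ModuleCat.of R M) reg
    (fun i hi => hext i (by omega))
  let Q := M ⧸ (Ideal.ofList rs • ⊤ : Submodule R M)
  let f : (R ⧸ I) →ₗ[R] Q := Submodule.liftQ I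
    (LinearMap.toSpanSingleton R Q (Submodule.Quotient.mk w)) (by
      intro a ha
      rw [LinearMap.mem_ker, LinearMap.toSpanSingleton_apply, ← Submodule.Quotient.mk_smul,
        Submodule.Quotient.mk_eq_zero]
      exact hsoc a ha)
  have hf : f = 0 := Subsingleton.elim (h := hs) _ _
  have h1 : f (Submodule.Quotient.mk 1) = 0 := by rw [hf]; rfl
  apply hw'
  rw [← Submodule.Quotient.mk_eq_zero]
  have h2 : f (Submodule.Quotient.mk 1) = (1 : R) • (Submodule.Quotient.mk w : Q) := rfl
  rw [h1, one_smul] at h2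
  exact h2.symm

lemma mem_span_X_mul {K : Type*} [Field K] {n : ℕ} (C : Set (Fin n)) (A : Set (Fin n →₀ ℕ))
    (I : Ideal (MvPolynomial (Fin n) K))
    (hI : I = Ideal.span ((fun d => monomial d (1 : K)) '' A)) (g : MvPolynomial (Fin n) K) :
    g ∈ Ideal.span ((fun i => (X i : MvPolynomial (Fin n) K)) '' C) * I ↔
      ∀ m ∈ g.support, ∃ i ∈ C, ∃ a ∈ A, Finsupp.single i 1 + a ≤ m := by
  have : Ideal.span ((fun i => (X i : MvPolynomial (Fin n) K)) '' C) * I =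
      Ideal.span ((fun d => monomial d (1 : K)) '' 
        {d | ∃ i ∈ C, ∃ a ∈ A, Finsupp.single i 1 + a = d}) := by
    rw [hI, Ideal.span_mul_span']
    congr 1
    ext p
    simp only [Set.mem_mul, Set.mem_image, Set.mem_ofPred_eq]
    constructor
    · rintro ⟨_, ⟨i, hi, rfl⟩, _, ⟨a, ha, rfl⟩, rfl⟩
      exact ⟨_, ⟨i, hi, a, ha, rfl⟩, by simp [X, monomial_mul]⟩
    · rintro ⟨_, ⟨i, hi, a, ha, rfl⟩, rfl⟩
      exact ⟨_, ⟨i, hi, rfl⟩, _, ⟨a, ha, rfl⟩, by simp [X, monomial_mul]⟩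
  rw [this, mem_ideal_span_monomial_image]
  constructor
  · intro h m hm
    obtain ⟨_, ⟨i, hi, a, ha, rfl⟩, hle⟩ := h m hm
    exact ⟨i, hi, a, ha, hle⟩
  · intro h m hm
    obtain ⟨i, hi, a, ha, hle⟩ := h m hm
    exact ⟨_, ⟨i, hi, a, ha, rfl⟩, hle⟩

lemma depth_blocks {K : Type u} [Field K] {n s : ℕ} (b : Fin n → Fin s) (c : Fin s → Fin n)
    (hbc : ∀ i, b (c i) = i) (I : Ideal (MvPolynomial (Fin n) K))
    (hI : ∀ f, f ∈ I ↔ ∀ m ∈ f.support, ∀ i, ∃ j, b j = i ∧ m j ≠ 0) :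
    moduleDepth (MvPolynomial (Fin n) K) (maxIdeal n K) I = s := by
  classical
  set A : Set (Fin n →₀ ℕ) := {m | ∀ i, ∃ j, b j = i ∧ m j ≠ 0} with hA
  have hIA : I = Ideal.span ((fun d => monomial d (1 : K)) '' A) := by
    ext f
    rw [hI, mem_ideal_span_monomial_image]
    constructor
    · intro h m hm
      exact ⟨m, h m hm, le_rfl⟩
    · intro h m hm i
      obtain ⟨a, ha, hle⟩ := h m hm
      obtain ⟨j, hj, hj'⟩ := ha i
      exact ⟨j, hj, by have := hle j; omega⟩
  have cinj : Function.Injective c := Function.LeftInverse.injective hbc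
  let rs : List (MvPolynomial (Fin n) K) := List.ofFn (fun i : Fin s => X (c i))
  have hlen : rs.length = s := by simp [rs]
  let C : ℕ → Set (Fin n) := fun k => {j | ∃ i : Fin s, (i : ℕ) < k ∧ c i = j}
  have htake : ∀ k, Ideal.ofList (rs.take k) =
      Ideal.span ((fun i => (X i : MvPolynomial (Fin n) K)) '' C k) := by
    intro k
    unfold Ideal.ofList
    congr 1
    ext p
    simp only [Set.mem_ofPred_eq, List.mem_take_iff_getElem, Set.mem_image, rs, C]
    constructor
    · rintro ⟨i, hi, rfl⟩
      simp at hi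
      exact ⟨_, ⟨⟨i, hi.2⟩, hi.1, rfl⟩, by simp⟩
    · rintro ⟨_, ⟨i, hi, rfl⟩, rfl⟩
      exact ⟨i, by simp [hi], by simp⟩
  have hmem : ∀ (J : Ideal (MvPolynomial (Fin n) K)) (x : I),
      x ∈ (J • ⊤ : Submodule (MvPolynomial (Fin n) K) I) ↔ (x : MvPolynomial (Fin n) K) ∈ J * I := by
    intro J x
    rw [Submodule.mem_smul_top_iff, smul_eq_mul]
  have hall : Ideal.ofList rs = 
      Ideal.span ((fun i => (X i : MvPolynomial (Fin n) K)) '' C s) := by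
    rw [← htake s, List.take_of_length_le hlen.le]
  -- socle element
  let w : Fin n →₀ ℕ := ∑ i, Finsupp.single (c i) 1
  have hwc : ∀ i, w (c i) = 1 := by
    intro i
    simp [w, Finsupp.finsetSum_apply, Finsupp.single_apply, cinj.eq_iff]
  have hwj : ∀ j, w j ≠ 0 → c (b j) = j := by
    intro j hj
    by_contra hne
    apply hj
    simp only [w, Finsupp.finsetSum_apply]
    apply Finset.sum_eq_zero
    intro i _
    rw [Finsupp.single_apply, if_neg]
    rintro rfl
    exact hne (by rw [hbc])
  have hwA : w ∈ A := fun i => ⟨c i, hbc i, by rw [hwc]; exact one_ne_zero⟩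
  have hwI : monomial w (1 : K) ∈ I := by
    rw [hIA]; exact Ideal.subset_span ⟨w, hwA, rfl⟩
  have hsupp : ∀ d : Fin n →₀ ℕ, (monomial d (1 : K)).support = {d} := fun d => by
    rw [support_monomial, if_neg one_ne_zero]
  conv_rhs => rw [← hlen]
  refine depth_eq_of_socle (maxIdeal n K) I rs ?_ ?_ ⟨monomial w 1, hwI⟩ ?_ ?_
  · intro p hp
    simp only [rs, List.mem_ofFn] at hp
    obtain ⟨i, rfl⟩ := hp
    exact Ideal.subset_span ⟨c i, by simp, rfl⟩
  · constructor
    intro k hk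
    rw [isSMulRegular_iff_right_eq_zero_of_smul]
    intro q hq
    obtain ⟨f, rfl⟩ := Submodule.Quotient.mk_surjective _ q
    have hks : k < s := hlen ▸ hk
    rw [← Submodule.Quotient.mk_smul, Submodule.Quotient.mk_eq_zero, hmem, htake,
      mem_span_X_mul _ A I hIA] at hq
    rw [Submodule.Quotient.mk_eq_zero, hmem, htake, mem_span_X_mul _ A I hIA]
    have hg : rs[k] = X (c ⟨k, hks⟩) := by simp [rs]
    rw [hg] at hq
    intro m hm
    have hmA : m ∈ A := (hI _).1 f.2 m hm
    obtain ⟨_, ⟨i, hik, rfl⟩, a, ha, hle⟩ := hq (Finsupp.single (c ⟨k, hks⟩) 1 + m) (by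
      rw [mem_support_iff] at hm ⊢
      simpa [coeff_X_mul] using hm)
    have hne : c i ≠ c ⟨k, hks⟩ := fun h => by
      have := cinj h; subst this; simp at hik
    refine ⟨c i, ⟨i, hik, rfl⟩, m - Finsupp.single (c i) 1, ?_, ?_⟩
    · intro l
      by_cases hl : l = i
      · subst hl
        obtain ⟨j, hj, hj'⟩ := ha l
        refine ⟨j, hj, ?_⟩
        have hjk : c ⟨k, hks⟩ ≠ j := fun h => by
          subst h
          rw [hbc] at hj
          exact hne (by rw [hj])
        have := hle j
        simp only [Finsupp.add_apply, Finsupp.single_apply, if_neg hjk, Finsupp.tsub_apply] at this ⊢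
        omega
      · obtain ⟨j, hj, hj'⟩ := hmA l
        refine ⟨j, hj, ?_⟩
        have : c i ≠ j := fun h => by
          subst h
          rw [hbc] at hj
          exact hl hj.symm
        simpa [Finsupp.single_apply, this] using hj'
    · have h1 : 1 ≤ m (c i) := by
        have := hle (c i)
        simp only [Finsupp.add_apply, Finsupp.single_apply, if_neg hne.symm, if_true] at this
        omega
      rw [add_tsub_cancel_of_le]
      exact Finsupp.single_le_iff.mpr h1
  · rw [hmem, maxIdeal, varIdeal, mem_span_X_mul _ A I hIA]
    intro h
    obtain ⟨j, -, a, ha, hle⟩ := h w (by simp [hsupp])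
    have hj := hle j
    simp only [Finsupp.add_apply, Finsupp.single_eq_same] at hj
    have hcj := hwj j (by omega)
    obtain ⟨j', hj1, hj2⟩ := ha (b j)
    have hj3 := hle j'
    simp only [Finsupp.add_apply] at hj3
    have hcj' := hwj j' (by omega)
    rw [hj1, hcj] at hcj'
    subst hcj'
    have := hwc (b j)
    rw [hcj] at this
    omega
  · intro p hp
    rw [hmem, hall]
    change p * monomial w 1 ∈ _
    have key : maxIdeal n K ≤ 
        Submodule.comap (LinearMap.mulRight (MvPolynomial (Fin n) K) (monomial w (1 : K)))
        (Ideal.span ((fun i => (X i : MvPolynomial (Fin n) K)) '' C s) * I) := by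
      unfold maxIdeal varIdeal
      rw [Ideal.span_le]
      rintro _ ⟨j, -, rfl⟩
      change X j * monomial w (1 : K) ∈ 
        Ideal.span ((fun i => (X i : MvPolynomial (Fin n) K)) '' C s) * I
      rw [mem_span_X_mul _ A I hIA]
      intro m hm
      have hm' : m = Finsupp.single j 1 + w := by
        rw [X, monomial_mul, one_mul, hsupp] at hm
        simpa using hm
      subst hm'
      have hle : Finsupp.single (c (b j)) 1 ≤ w := Finsupp.single_le_iff.mpr (hwc _).ge
      refine ⟨c (b j), ⟨b j, (b j).2, rfl⟩, Finsupp.single j 1 + (w - Finsupp.single (c (b j)) 1),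
        ?_, ?_⟩
      · intro l
        by_cases hl : b j = l
        · exact ⟨j, hl, by simp⟩
        · refine ⟨c l, hbc l, ?_⟩
          have : c (b j) ≠ c l := fun h => hl (cinj h)
          simp [Finsupp.single_apply, this, hwc]
      · rw [add_left_comm, add_tsub_cancel_of_le hle]
    exact key hp

/-- for primes `P_i` generated by disjoint consecutive blocks of
variables partitioning all `n` variables, `depth (P₁ ∩ ⋯ ∩ P_s) = s`. -/
theorem depth_inter_disjoint_primes {K : Type*} [Field K] (n s : ℕ) (hs : 0 < s)
    (r : ℕ → ℕ) (h0 : r 0 = 0) (hn : r s = n) (hmono : ∀ i < s, r i < r (i + 1)) :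
    moduleDepth (MvPolynomial (Fin n) K) (maxIdeal n K)
      ↥(⨅ i ∈ Finset.range s, varIdeal K
          (Finset.univ.filter fun j : Fin n => r i ≤ (j : ℕ) ∧ (j : ℕ) < r (i + 1))) =
      s := by
  have hmon : ∀ i j, i ≤ j → j ≤ s → r i ≤ r j := by
    intro i j hij
    induction j, hij using Nat.le_induction with
    | base => intro _; exact le_rfl
    | succ j _ ih =>
      intro hj
      exact (ih (by omega)).trans (hmono j (by omega)).le
  have hex : ∀ j : Fin n, ∃ i : Fin s, r i ≤ (j : ℕ) ∧ (j : ℕ) < r (i + 1) := by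
    intro j
    have h1 : ∃ i, (j : ℕ) < r (i + 1) := ⟨s - 1, by
      rw [Nat.sub_add_cancel hs, hn]; exact j.2⟩
    classical
    have hlt : Nat.find h1 < s := by
      have := Nat.find_min' h1 (m := s - 1) (by rw [Nat.sub_add_cancel hs, hn]; exact j.2)
      omega
    refine ⟨⟨Nat.find h1, hlt⟩, ?_, Nat.find_spec h1⟩
    change r (Nat.find h1) ≤ (j : ℕ)
    rcases hf : Nat.find h1 with _ | i
    · simp [h0]
    · have := Nat.find_min h1 (m := i) (by omega)
      simpa using this
  choose b hb1 hb2 using hex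
  have hbu : ∀ (j : Fin n) (i : Fin s), r i ≤ (j : ℕ) → (j : ℕ) < r (i + 1) → b j = i := by
    intro j i h1 h2
    have a1 := hb1 j
    have a2 := hb2 j
    rcases lt_trichotomy (b j : ℕ) i with h | h | h
    · have := hmon (b j + 1) i h i.2.le
      omega
    · exact Fin.ext h
    · have := hmon (i + 1) (b j) h (b j).2.le
      omega
  have hc : ∀ i : Fin s, r i < n := fun i => by
    have := hmono i i.2
    have := hmon (i + 1) s i.2 le_rfl
    omega
  refine depth_blocks b (fun i => ⟨r i, hc i⟩) (fun i => hbu _ i le_rfl (hmono i i.2)) _ ?_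
  intro f
  simp only [Submodule.mem_iInf, Finset.mem_range, varIdeal, mem_ideal_span_X_image]
  constructor
  · intro h m hm i
    obtain ⟨j, hj, hj'⟩ := h i i.2 m hm
    simp at hj
    exact ⟨j, hbu j i hj.1 hj.2, hj'⟩
  · intro h i hi m hm
    obtain ⟨j, hj, hj'⟩ := h m hm ⟨i, hi⟩
    refine ⟨j, ?_, hj'⟩
    have a1 := hb1 j
    have a2 := hb2 j
    rw [hj] at a1 a2
    simpa using ⟨a1, a2⟩
end

section
/- Let 0 = r_0 < r_1 < ... < r_s = n, S = K[x_1,...,x_n], P_i = (x_{r_{i-1}+1},...,x_{r_i}), and I = P_1 ∩ ... ∩ P_s. Then sdepth_S(I) ≥ Σ_{i=1}^s ⌈(r_i - r_{i-1})/2⌉ ≥ s; in particular sdepth_S(I) ≥ depth_S(I), so Stanley's Conjecture holds for I. -/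
open MvPolynomial

/-- parity automaton state -/
def stA (Z : ℕ → Bool) (c : Bool) : ℕ → Bool
  | 0 => c
  | k + 1 => if Z k then Nat.bodd k else stA Z c k

lemma stA_indep (Z : ℕ → Bool) (c c' : Bool) (m : ℕ) (h : ∃ k < m, Z k = true) :
    stA Z c m = stA Z c' m := by
  induction m with
  | zero => obtain ⟨k, hk, _⟩ := h; omega
  | succ m ih =>
    simp only [stA]
    by_cases hm : Z m = true
    · simp [hm]
    · simp only [hm]
      apply ih
      obtain ⟨k, hk, hz⟩ := h
      refine ⟨k, ?_, hz⟩
      rcases Nat.lt_succ_iff_lt_or_eq.mp hk with h | h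
      · exact h
      · subst h; exact absurd hz hm

lemma stA_const (Z : ℕ → Bool) (c : Bool) (m : ℕ)
    (h : ∀ k < m, Z k = true → Nat.bodd k = stA Z c k) : stA Z c m = c := by
  induction m with
  | zero => rfl
  | succ m ih =>
    have := ih (fun k hk => h k (by omega))
    simp only [stA]
    by_cases hm : Z m = true
    · simp [hm, h m (by omega) hm, this]
    · simp [hm, this]

lemma stA_between (Z W : ℕ → Bool) (c : Bool) (m : ℕ)
    (h1 : ∀ k < m, Z k = true → Nat.bodd k ≠ stA Z c k → W k = true)
    (h2 : ∀ k < m, W k = true → Z k = true ∨ Nat.bodd k = stA Z c k) :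
    ∀ k ≤ m, stA W c k = stA Z c k := by
  intro k
  induction k with
  | zero => intro _; rfl
  | succ k ih =>
    intro hk
    have := ih (by omega)
    have a := h1 k (by omega)
    have b := h2 k (by omega)
    simp only [stA]
    grind

lemma stA_count (Z : ℕ → Bool) (c : Bool) (m : ℕ) :
    m + (∑ k ∈ Finset.range m, if Z k = true ∧ Nat.bodd k ≠ stA Z c k then 1 else 0) ≤
    2 * (∑ k ∈ Finset.range m, if Z k = true ∨ Nat.bodd k = stA Z c k then 1 else 0) +
      (if Nat.bodd m = stA Z c m then 1 else 0) := by
  induction m with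
  | zero => simp
  | succ m ih =>
    rw [Finset.sum_range_succ, Finset.sum_range_succ]
    simp only [stA, Nat.bodd_succ]
    rcases hz : Z m <;> rcases hb : Nat.bodd m <;> rcases hs : stA Z c m <;> 
      simp [hb, hs] at ih ⊢ <;> omega

/-- initial state -/
def inA (Z : ℕ → Bool) (m : ℕ) : Bool := !(stA Z true m)

lemma exists_X (Z : ℕ → Bool) (m : ℕ) (h : ∃ k < m, Z k = true) :
    ∃ k < m, Z k = true ∧ Nat.bodd k ≠ stA Z (inA Z m) k := by
  by_contra hc
  push Not at hc
  have h1 := stA_const Z (inA Z m) m hc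
  rw [stA_indep Z _ true m h] at h1
  simp [inA] at h1

lemma count_Y (Z : ℕ → Bool) (m : ℕ) (h : ∃ k < m, Z k = true) :
    (m + 1) / 2 ≤ 
      ((Finset.range m).filter fun k => Z k = true ∨ Nat.bodd k = stA Z (inA Z m) k).card := by
  have h1 := stA_count Z (inA Z m) m
  obtain ⟨k, hk, hx⟩ := exists_X Z m h
  have h2 : 1 ≤ (∑ k ∈ Finset.range m, if Z k = true ∧ Nat.bodd k ≠ stA Z (inA Z m) k then 1 else 0) := by
    rw [← Finset.card_filter]
    exact Finset.card_pos.mpr ⟨k, by simp [hk, hx]⟩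
  rw [Finset.card_filter]
  split_ifs at h1 <;> omega

lemma in_between (Z W : ℕ → Bool) (m : ℕ) (h : ∃ k < m, Z k = true)
    (h1 : ∀ k < m, Z k = true → Nat.bodd k ≠ stA Z (inA Z m) k → W k = true)
    (h2 : ∀ k < m, W k = true → Z k = true ∨ Nat.bodd k = stA Z (inA Z m) k) :
    ∀ k < m, stA W (inA W m) k = stA Z (inA Z m) k := by
  have hb := stA_between Z W _ m h1 h2
  have hW : ∃ k < m, W k = true := by
    obtain ⟨k, hk, a, b⟩ := exists_X Z m h
    exact ⟨k, hk, h1 k hk a b⟩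
  have : inA W m = inA Z m := by
    have := hb m le_rfl
    rw [stA_indep W _ true m hW, stA_indep Z _ true m h] at this
    simp [inA, this]
  intro k hk
  rw [this]; exact hb k hk.le

lemma block_comb (n a b : ℕ) (hb : b ≤ n) :
    ∃ X Y : Finset (Fin n) → Finset (Fin n), ∀ Z : Finset (Fin n),
      (∃ v ∈ Z, a ≤ (v : ℕ) ∧ (v : ℕ) < b) →
      X Z ⊆ Z ∧ (∀ v ∈ X Z, a ≤ (v : ℕ) ∧ (v : ℕ) < b) ∧
      (∀ v ∈ Z, a ≤ (v : ℕ) ∧ (v : ℕ) < b → v ∈ Y Z) ∧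
      (∀ v ∈ Y Z, a ≤ (v : ℕ) ∧ (v : ℕ) < b) ∧ (X Z).Nonempty ∧
      (b - a + 1) / 2 ≤ (Y Z).card ∧
      ∀ W, X Z ⊆ W → (∀ v ∈ W, a ≤ (v : ℕ) ∧ (v : ℕ) < b → v ∈ Y Z) → 
        X W = X Z ∧ Y W = Y Z := by
  classical
  let ex : Finset (Fin n) → ℕ → Bool := fun Z k => decide (∃ v ∈ Z, (v : ℕ) = a + k)
  have hex : ∀ Z (v : Fin n), a ≤ (v:ℕ) → (ex Z (v - a) = true ↔ v ∈ Z) := by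
    intro Z v hv
    simp only [ex, decide_eq_true_eq]
    constructor
    · rintro ⟨w, hw, h⟩
      have : w = v := by ext; omega
      exact this ▸ hw
    · intro h; exact ⟨v, h, by omega⟩
  let S : Finset (Fin n) → ℕ → Bool := fun Z k => stA (ex Z) (inA (ex Z) (b - a)) k
  refine ⟨fun Z => Finset.univ.filter fun v => (a ≤ (v:ℕ) ∧ (v:ℕ) < b) ∧ v ∈ Z ∧
      Nat.bodd (v - a) ≠ S Z (v - a),
    fun Z => Finset.univ.filter fun v => (a ≤ (v:ℕ) ∧ (v:ℕ) < b) ∧ (v ∈ Z ∨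
      Nat.bodd (v - a) = S Z (v - a)), ?_⟩
  rintro Z ⟨v0, hv0, hv1, hv2⟩
  have hne : ∃ k < b - a, ex Z k = true := ⟨v0 - a, by omega, (hex Z v0 hv1).2 hv0⟩
  refine ⟨?_, ?_, ?_, ?_, ?_, ?_, ?_⟩
  · intro v hv; simp at hv; exact hv.2.1
  · intro v hv; simp at hv; exact hv.1
  · intro v hv h; simp [hv, h]
  · intro v hv; simp at hv; exact hv.1
  · obtain ⟨k, hk, h1, h2⟩ := exists_X _ _ hne
    have hkn : a + k < n := by omega
    refine ⟨⟨a + k, hkn⟩, ?_⟩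
    have := (hex Z ⟨a + k, hkn⟩ (by simp)).1 (by simpa using h1)
    simp only [Finset.mem_filter, Finset.mem_univ, true_and]
    refine ⟨⟨by simp, by omega⟩, this, ?_⟩
    simpa using h2
  · refine (count_Y _ _ hne).trans ?_
    apply Finset.card_le_card_of_injOn (fun k => if h : a + k < n then ⟨a + k, h⟩ else v0)
    · intro k hk
      simp only [Finset.coe_filter, Finset.mem_range, Set.mem_ofPred_eq] at hk
      have hkn : a + k < n := by omega
      have := (hex Z ⟨a + k, hkn⟩ (by simp))
      simp only [Nat.add_sub_cancel_left] at this
      simp only [hkn, dite_true, Finset.coe_filter, Finset.mem_univ, true_and, Set.mem_ofPred_eq]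
      refine ⟨⟨by simp, by omega⟩, ?_⟩
      rw [← this]
      simpa using hk.2
    · intro k hk k' hk' h
      simp only [Finset.coe_filter, Finset.mem_range, Set.mem_ofPred_eq] at hk hk'
      have hkn : a + k < n := by omega
      have hkn' : a + k' < n := by omega
      simpa [hkn, hkn'] using h
  · intro W hW1 hW2
    have key : ∀ k < b - a, S W k = S Z k := by
      apply in_between _ _ _ hne
      · intro k hk h1 h2
        have hkn : a + k < n := by omega
        have e1 := (hex Z ⟨a + k, hkn⟩ (by simp))
        have e2 := (hex W ⟨a + k, hkn⟩ (by simp))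
        simp only [Nat.add_sub_cancel_left] at e1 e2
        rw [e2]
        apply hW1
        simp only [Finset.mem_filter, Finset.mem_univ, true_and]
        refine ⟨⟨by simp, by omega⟩, e1.1 h1, ?_⟩
        simpa using h2
      · intro k hk h1
        have hkn : a + k < n := by omega
        have e1 := (hex Z ⟨a + k, hkn⟩ (by simp))
        have e2 := (hex W ⟨a + k, hkn⟩ (by simp))
        simp only [Nat.add_sub_cancel_left] at e1 e2
        have := hW2 _ (e2.1 h1) ⟨by simp, by simp; omega⟩
        simp only [Finset.mem_filter, Finset.mem_univ, true_and, Nat.add_sub_cancel_left] at this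
        rw [e1]; exact this.2
    constructor
    · ext v
      simp only [Finset.mem_filter, Finset.mem_univ, true_and]
      refine and_congr_right fun hv => ?_
      rw [key (v - a) (by omega)]
      refine and_congr_left fun h => ⟨fun hw => ?_, fun hz => ?_⟩
      · have := hW2 v hw hv
        simp only [Finset.mem_filter, Finset.mem_univ, true_and] at this
        tauto
      · apply hW1
        simp only [Finset.mem_filter, Finset.mem_univ, true_and]
        tauto
    · ext v
      simp only [Finset.mem_filter, Finset.mem_univ, true_and]
      refine and_congr_right fun hv => ?_
      rw [key (v - a) (by omega)]
      by_cases h : Nat.bodd (v - a) = S Z (v - a)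
      · simp [h]
      simp only [h, or_false]
      refine ⟨fun hw => ?_, fun hz => ?_⟩
      · have := hW2 v hw hv
        simp only [Finset.mem_filter, Finset.mem_univ, true_and] at this
        tauto
      · apply hW1
        simp only [Finset.mem_filter, Finset.mem_univ, true_and]
        tauto

lemma full_comb (n s : ℕ) (r : ℕ → ℕ) (hn : ∀ i < s, r (i + 1) ≤ n)
    (hdis : ∀ v i j, i < s → j < s → r i ≤ v → v < r (i + 1) → r j ≤ v → v < r (j + 1) → i = j)
    (hcov : ∀ v < n, ∃ i < s, r i ≤ v ∧ v < r (i + 1)) :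
    ∃ X Y : Finset (Fin n) → Finset (Fin n), ∀ Z : Finset (Fin n),
      (∀ i < s, ∃ v ∈ Z, r i ≤ (v : ℕ) ∧ (v : ℕ) < r (i + 1)) →
      X Z ⊆ Z ∧ Z ⊆ Y Z ∧ 
      (∀ i < s, ∃ v ∈ X Z, r i ≤ (v : ℕ) ∧ (v : ℕ) < r (i + 1)) ∧
      (∑ i ∈ Finset.range s, (r (i + 1) - r i + 1) / 2) ≤ (Y Z).card ∧
      ∀ W, X Z ⊆ W → W ⊆ Y Z → X W = X Z ∧ Y W = Y Z := by
  classical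
  choose X Y h using fun i : Fin s => block_comb n (r i) (r (i + 1)) (hn i i.2)
  refine ⟨fun Z => Finset.univ.biUnion fun i => X i Z, fun Z => Finset.univ.biUnion fun i => Y i Z,
    fun Z hZ => ?_⟩
  have H := fun i : Fin s => h i Z (hZ i i.2)
  refine ⟨?_, ?_, ?_, ?_, ?_⟩
  · intro v hv
    simp only [Finset.mem_biUnion, Finset.mem_univ, true_and] at hv
    obtain ⟨i, hi⟩ := hv
    exact (H i).1 hi
  · intro v hv
    obtain ⟨i, hi, hh⟩ := hcov v v.2
    simp only [Finset.mem_biUnion, Finset.mem_univ, true_and]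
    exact ⟨⟨i, hi⟩, (H ⟨i, hi⟩).2.2.1 v hv hh⟩
  · intro i hi
    obtain ⟨v, hv⟩ := (H ⟨i, hi⟩).2.2.2.2.1
    refine ⟨v, ?_, (H ⟨i, hi⟩).2.1 v hv⟩
    simp only [Finset.mem_biUnion, Finset.mem_univ, true_and]
    exact ⟨_, hv⟩
  · rw [Finset.card_biUnion, Finset.sum_range]
    · exact Finset.sum_le_sum fun i _ => (H i).2.2.2.2.2.1
    · intro i _ j _ hij
      refine Finset.disjoint_left.mpr ?_
      intro v hv hv'
      have a := (H i).2.2.2.1 v hv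
      have b := (H j).2.2.2.1 v hv'
      exact hij (Fin.ext (hdis v i j i.2 j.2 a.1 a.2 b.1 b.2))
  · intro W h1 h2
    have key : ∀ i, X i W = X i Z ∧ Y i W = Y i Z := by
      intro i
      apply (H i).2.2.2.2.2.2 W
      · exact (Finset.subset_biUnion_of_mem (fun i => X i Z) (Finset.mem_univ i)).trans h1
      · intro v hv a
        have := h2 hv
        simp only [Finset.mem_biUnion, Finset.mem_univ, true_and] at this
        obtain ⟨j, hj⟩ := this
        have b := (H j).2.2.2.1 v hj
        have : i = j := (Fin.ext (hdis v i j i.2 j.2 a.1 a.2 b.1 b.2))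
        exact this ▸ hj
    simp only [key, and_self]

/-- exponents hitting every block -/
def GoodE {n : ℕ} (s : ℕ) (A : ℕ → Finset (Fin n)) (d : Fin n →₀ ℕ) : Prop :=
  ∀ i < s, ∃ v ∈ A i, d v ≠ 0

lemma GoodE.mono {n s : ℕ} {A : ℕ → Finset (Fin n)} {d e : Fin n →₀ ℕ} (h : GoodE s A d)
    (hde : d ≤ e) : GoodE s A e := by
  intro i hi
  obtain ⟨v, hv, h0⟩ := h i hi
  have := hde v
  exact ⟨v, hv, by omega⟩

lemma mem_inter_iff {K : Type*} [Field K] {n : ℕ} (s : ℕ) (A : ℕ → Finset (Fin n))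
    (f : MvPolynomial (Fin n) K) :
    f ∈ (⨅ i ∈ Finset.range s, varIdeal K (A i) : Ideal (MvPolynomial (Fin n) K)) ↔
      ∀ d ∈ f.support, GoodE s A d := by
  simp only [Submodule.mem_iInf, varIdeal, Finset.mem_range]
  constructor
  · intro h d hd i hi
    have := (mem_ideal_span_X_image (s := (↑(A i) : Set (Fin n)))).1 (h i hi) d hd
    simpa using this
  · intro h i hi
    refine (mem_ideal_span_X_image (s := (↑(A i) : Set (Fin n)))).2 fun d hd => ?_
    simpa using h d hd i hi

lemma inter_eq_span {K : Type*} [Field K] {n : ℕ} (s : ℕ) (A : ℕ → Finset (Fin n)) :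
    (⨅ i ∈ Finset.range s, varIdeal K (A i) : Ideal (MvPolynomial (Fin n) K)) =
      Ideal.span ((fun d => monomial d (1 : K)) '' {d | GoodE s A d}) := by
  ext f
  rw [mem_inter_iff, mem_ideal_span_monomial_image]
  refine forall₂_congr fun d _ => ⟨fun h => ⟨d, h, le_rfl⟩, ?_⟩
  rintro ⟨e, he, hle⟩
  exact GoodE.mono he hle

lemma monomial_mem_inter {K : Type*} [Field K] {n : ℕ} (s : ℕ) (A : ℕ → Finset (Fin n))
    (d : Fin n →₀ ℕ) (h : GoodE s A d) : monomial d (1 : K) ∈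
    (⨅ i ∈ Finset.range s, varIdeal K (A i) : Ideal (MvPolynomial (Fin n) K)) := by
  classical
  rw [mem_inter_iff]
  intro e he
  rw [support_monomial, if_neg one_ne_zero, Finset.mem_singleton] at he
  exact he ▸ h

/-- indicator exponent -/
noncomputable def indE {n : ℕ} (X : Finset (Fin n)) : Fin n →₀ ℕ :=
  Finsupp.equivFunOnFinite.symm fun v => if v ∈ X then 1 else 0

lemma stanleySpace_indE {n : ℕ} (K : Type*) [Field K] (X Y : Finset (Fin n)) (hXY : X ⊆ Y) :
    stanleySpace K (indE X) Y = Submodule.span K ((fun d => monomial d (1 : K)) ''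
      {d | X ⊆ d.support ∧ d.support ⊆ Y}) := by
  unfold stanleySpace
  congr 1
  ext f
  constructor
  · rintro ⟨e, he, rfl⟩
    refine ⟨_, ⟨?_, ?_⟩, rfl⟩
    · intro v hv
      simp [indE, hv]
    · intro v hv
      simp only [Finsupp.mem_support_iff, Finsupp.add_apply] at hv
      by_cases h : v ∈ X
      · exact hXY h
      · apply he
        simpa [indE, h] using hv
  · rintro ⟨d, ⟨h1, h2⟩, rfl⟩
    refine ⟨d - indE X, ?_, ?_⟩
    · intro v hv
      apply h2
      rw [Finsupp.mem_support_iff]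
      rw [Finsupp.tsub_apply] at hv
      omega
    · have : indE X + (d - indE X) = d := by
        ext v
        have := @h1 v
        simp only [Finsupp.mem_support_iff] at this
        by_cases h : v ∈ X
        · have := this h
          simp [indE, h]; omega
        · simp [indE, h]
      simp only [this]

lemma stanley_exists {K : Type*} [Field K] {n : ℕ} (s : ℕ) (A : ℕ → Finset (Fin n)) (k : ℕ)
    (X Y : Finset (Fin n) → Finset (Fin n))
    (h : ∀ Z : Finset (Fin n), (∀ i < s, ∃ v ∈ Z, v ∈ A i) →
      X Z ⊆ Z ∧ Z ⊆ Y Z ∧ (∀ i < s, ∃ v ∈ X Z, v ∈ A i) ∧ k ≤ (Y Z).card ∧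
      ∀ W, X Z ⊆ W → W ⊆ Y Z → X W = X Z ∧ Y W = Y Z) :
    ∃ D : StanleyDecomp K (⨅ i ∈ Finset.range s, varIdeal K (A i) :
      Ideal (MvPolynomial (Fin n) K)), ∀ i, k ≤ (D.Z i).card := by
  classical
  let F : Finset (Finset (Fin n) × Finset (Fin n)) :=
    (Finset.univ.filter fun Z : Finset (Fin n) => ∀ i < s, ∃ v ∈ Z, v ∈ A i).image
      fun Z => (X Z, Y Z)
  have hF : ∀ p ∈ F, ∃ Z : Finset (Fin n), (∀ i < s, ∃ v ∈ Z, v ∈ A i) ∧ p = (X Z, Y Z) := by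
    intro p hp
    simp only [F, Finset.mem_image, Finset.mem_filter, Finset.mem_univ, true_and] at hp
    obtain ⟨Z, a, b⟩ := hp
    exact ⟨Z, a, b.symm⟩
  let q : Fin F.card → Finset (Fin n) × Finset (Fin n) := fun i => (F.equivFin.symm i).1
  have hq : ∀ i, q i ∈ F := fun i => (F.equivFin.symm i).2
  have hqi : Function.Injective q := fun i j hij =>
    F.equivFin.symm.injective (Subtype.ext hij)
  have hgoodX : ∀ i, GoodE s A (indE (q i).1) := by
    intro i j hj
    obtain ⟨Z, hZ, e⟩ := hF _ (hq i)
    obtain ⟨v, hv, hv'⟩ := (h Z hZ).2.2.1 j hj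
    exact ⟨v, hv', by simp [indE, e, hv]⟩
  let T : Fin F.card → Set (Fin n →₀ ℕ) := fun i =>
    {d | (q i).1 ⊆ d.support ∧ d.support ⊆ (q i).2}
  have hsp : ∀ i, stanleySpace K (indE (q i).1) (q i).2 =
      Submodule.span K ((fun d => monomial d (1 : K)) '' T i) := by
    intro i
    apply stanleySpace_indE
    obtain ⟨Z, hZ, e⟩ := hF _ (hq i)
    rw [e]
    exact (h Z hZ).1.trans (h Z hZ).2.1
  have hT : ∀ i d, d ∈ T i → q i = (X d.support, Y d.support) := by
    rintro i d ⟨h1, h2⟩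
    obtain ⟨Z, hZ, e⟩ := hF _ (hq i)
    rw [e] at h1 h2 ⊢
    have := (h Z hZ).2.2.2.2 _ h1 h2
    rw [this.1, this.2]
  have hTgood : ∀ d, GoodE s A d ↔ ∃ i, d ∈ T i := by
    intro d
    constructor
    · intro hd
      have hd' : ∀ i < s, ∃ v ∈ d.support, v ∈ A i := by
        intro i hi
        obtain ⟨v, a, b⟩ := hd i hi
        exact ⟨v, by simpa using b, a⟩
      have hm : (X d.support, Y d.support) ∈ F :=
        Finset.mem_image_of_mem (fun Z => (X Z, Y Z)) (by simpa using hd')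
      refine ⟨F.equivFin ⟨_, hm⟩, ?_⟩
      simp only [T, q, Equiv.symm_apply_apply]
      exact ⟨(h _ hd').1, (h _ hd').2.1⟩
    · rintro ⟨i, h1, h2⟩ j hj
      obtain ⟨v, hv, hv'⟩ := hgoodX i j hj
      refine ⟨v, hv, ?_⟩
      have : v ∈ (q i).1 := by
        by_contra hc
        simp [indE, hc] at hv'
      simpa using h1 this
  refine ⟨⟨F.card, fun i => indE (q i).1, fun i => (q i).2, ?_, ?_, ?_⟩, ?_⟩
  · intro i
    exact monomial_mem_inter s A _ (hgoodX i)
  · simp only [hsp]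
    intro i
    have : (⨆ j, ⨆ (_ : j ≠ i), Submodule.span K ((fun d => monomial d (1 : K)) '' T j)) =
        Submodule.span K ((fun d => monomial d (1 : K)) '' (⋃ j, ⋃ (_ : j ≠ i), T j)) := by
      simp only [Set.image_iUnion, Submodule.span_iUnion]
    rw [this]
    apply (basisMonomials (Fin n) K).linearIndependent.disjoint_span_image
    rw [Set.disjoint_left]
    intro d hd hd'
    simp only [Set.mem_iUnion] at hd'
    obtain ⟨j, hj, hd'⟩ := hd'
    exact hj (hqi ((hT j d hd').trans (hT i d hd).symm))
  · simp only [hsp]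
    rw [← Submodule.span_iUnion, ← Set.image_iUnion]
    apply le_antisymm
    · rw [Submodule.span_le]
      rintro _ ⟨d, hd, rfl⟩
      exact monomial_mem_inter s A _ ((hTgood d).2 (by simpa using hd))
    · intro f hf
      rw [Submodule.restrictScalars_mem, mem_inter_iff] at hf
      rw [f.as_sum]
      refine Submodule.sum_mem _ fun d hd => ?_
      have : monomial d (f.coeff d) = (f.coeff d) • monomial d (1 : K) := by
        rw [smul_monomial, smul_eq_mul, mul_one]
      rw [this]
      refine Submodule.smul_mem _ _ (Submodule.subset_span ⟨d, ?_, rfl⟩)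
      simpa using (hTgood d).1 (hf d hd)
  · intro i
    obtain ⟨Z, hZ, e⟩ := hF _ (hq i)
    simp only [e]
    exact (h Z hZ).2.2.2.1

lemma le_sdepth {K : Type*} [Field K] {n : ℕ} (I : Ideal (MvPolynomial (Fin n) K)) (hI : I ≠ ⊥)
    (k : ℕ) (h : ∃ D : StanleyDecomp K I, ∀ i, k ≤ (D.Z i).card) : k ≤ sdepth I := by
  refine le_csSup ⟨n, ?_⟩ h
  rintro k ⟨D, hD⟩
  by_cases hm : D.m = 0
  · exfalso
    apply hI
    have : IsEmpty (Fin D.m) := by rw [hm]; infer_instance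
    have h := D.total
    rw [iSup_of_empty] at h
    rw [← Submodule.restrictScalars_eq_bot_iff (S := K), ← h]
  · exact (hD ⟨0, by omega⟩).trans ((Finset.card_le_univ _).trans (by simp))

section depthpart

universe uu

open CategoryTheory Abelian RingTheory.Sequence in
lemma ext_zero_of_weaklyRegular {R : Type uu} [CommRing R] (N : ModuleCat.{uu} R) (ys : List R) :
    ∀ (M : ModuleCat.{uu} R), IsWeaklyRegular M ys →
      (∀ i < ys.length + 1, Subsingleton (Ext N M i)) →
      Subsingleton (N →ₗ[R] (M ⧸ (Ideal.ofList ys • ⊤ : Submodule R M))) := by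
  induction ys with
  | nil =>
    intro M _ h
    have h0 := h 0 (by simp)
    have : Subsingleton (N →ₗ[R] M) :=
      ((Ext.addEquiv₀.trans ModuleCat.homAddEquiv).symm.subsingleton :
        Subsingleton (N →ₗ[R] M))
    have e : (Ideal.ofList ([] : List R) • ⊤ : Submodule R M) = ⊥ := by simp
    rw [e]
    exact ((Submodule.quotEquivOfEqBot (⊥ : Submodule R M) rfl).congrRight :
      (N →ₗ[R] (M ⧸ (⊥ : Submodule R M))) ≃ₗ[R] (N →ₗ[R] M)).toEquiv.subsingleton
  | cons a ys ih =>
    intro M hreg h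
    rw [isWeaklyRegular_cons_iff] at hreg
    have := ih (ModuleCat.of R (QuotSMulTop a M)) hreg.2 (by
      intro i hi
      have zero1 := AddCommGrpCat.isZero_of_iff_subsingleton.mpr
        (h i (by simp only [List.length_cons]; omega))
      have zero2 := AddCommGrpCat.isZero_of_iff_subsingleton.mpr
        (h (i + 1) (by simp only [List.length_cons]; omega))
      exact AddCommGrpCat.subsingleton_of_isZero <| ShortComplex.Exact.isZero_of_both_zeros
        ((Ext.covariant_sequence_exact₃' N hreg.1.smulShortComplex_shortExact) i (i + 1) rfl)
        (zero1.eq_zero_of_src _) (zero2.eq_zero_of_tgt _))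
    exact ((Submodule.quotOfListConsSMulTopEquivQuotSMulTopInner M a ys).congrRight :
      (N →ₗ[R] _) ≃ₗ[R] (N →ₗ[R] _)).toEquiv.subsingleton

open RingTheory.Sequence in
lemma depth_le_of_socle {R : Type uu} [CommRing R] [IsNoetherianRing R] (I : Ideal R)
    (M : Type uu) [AddCommGroup M] [Module R M] [Module.Finite R M]
    (smul_lt : I • (⊤ : Submodule R M) < ⊤) (ys : List R) (hys : IsWeaklyRegular M ys)
    (z : M) (hz : z ∉ (Ideal.ofList ys • ⊤ : Submodule R M))
    (hIz : ∀ g ∈ I, g • z ∈ (Ideal.ofList ys • ⊤ : Submodule R M)) :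
    moduleDepth R I M ≤ ys.length := by
  apply csSup_le'
  rintro k ⟨rs, rfl, hmem, hreg⟩
  by_contra hlt
  push Not at hlt
  have h1 := ModuleCat.subsingleton_ext_of_exists_isRegular I (ModuleCat.of R (R ⧸ I))
    (by rw [Module.support_eq_zeroLocus]; exact (by rw [Ideal.annihilator_quotient]))
    (ModuleCat.of R M) smul_lt rs hmem hreg
  have h2 := ext_zero_of_weaklyRegular (ModuleCat.of R (R ⧸ I)) ys (ModuleCat.of R M) hys
    (fun i hi => h1 i (by omega))
  let φ : (R ⧸ I) →ₗ[R] (M ⧸ (Ideal.ofList ys • ⊤ : Submodule R M)) :=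
    Submodule.liftQ I (LinearMap.toSpanSingleton R _
      ((Ideal.ofList ys • ⊤ : Submodule R M).mkQ z)) (by
        intro g hg
        rw [LinearMap.mem_ker, LinearMap.toSpanSingleton_apply, ← map_smul,
          Submodule.mkQ_apply, Submodule.Quotient.mk_eq_zero]
        exact hIz g hg)
  have h3 : φ = 0 := h2.elim φ 0
  have h4 : φ (Submodule.Quotient.mk 1) = 0 := by rw [h3]; rfl
  apply hz
  have h5 : φ (Submodule.Quotient.mk 1) = (Ideal.ofList ys • ⊤ : Submodule R M).mkQ z := by
    simp only [φ]
    erw [Submodule.liftQ_apply]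
    simp
  rw [h5] at h4
  simpa using h4

end depthpart

lemma mem_smul_top_iff {R : Type*} [CommRing R] (J I : Ideal R) (f : I) :
    f ∈ (J • ⊤ : Submodule R I) ↔ (f : R) ∈ J * I := by
  have : Submodule.map I.subtype (J • ⊤ : Submodule R I) = J * I := by
    rw [Submodule.map_smul'', Submodule.map_top, Submodule.range_subtype, smul_eq_mul]
  rw [← this, Submodule.mem_map]
  constructor
  · intro h; exact ⟨f, h, rfl⟩
  · rintro ⟨g, hg, h⟩
    have : g = f := Subtype.ext h
    exact this ▸ hg

lemma mem_mul_inter {K : Type*} [Field K] {n : ℕ} (s : ℕ) (A : ℕ → Finset (Fin n))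
    (V : Set (Fin n)) (f : MvPolynomial (Fin n) K) :
    f ∈ Ideal.span ((fun i => (X i : MvPolynomial (Fin n) K)) '' V) *
      (⨅ i ∈ Finset.range s, varIdeal K (A i) : Ideal (MvPolynomial (Fin n) K)) ↔
    ∀ d ∈ f.support, ∃ j ∈ V, ∃ m, GoodE s A m ∧ Finsupp.single j 1 + m ≤ d := by
  have : Ideal.span ((fun i => (X i : MvPolynomial (Fin n) K)) '' V) *
      (⨅ i ∈ Finset.range s, varIdeal K (A i) : Ideal (MvPolynomial (Fin n) K)) =
      Ideal.span ((fun d => monomial d (1 : K)) ''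
        {d | ∃ j ∈ V, ∃ m, GoodE s A m ∧ Finsupp.single j 1 + m = d}) := by
    rw [inter_eq_span, Ideal.span_mul_span']
    congr 1
    ext g
    simp only [Set.mem_mul, Set.mem_image, Set.mem_ofPred_eq]
    constructor
    · rintro ⟨_, ⟨j, hj, rfl⟩, _, ⟨m, hm, rfl⟩, rfl⟩
      exact ⟨_, ⟨j, hj, m, hm, rfl⟩, by simp [X, monomial_mul]⟩
    · rintro ⟨_, ⟨j, hj, m, hm, rfl⟩, rfl⟩
      exact ⟨_, ⟨j, hj, rfl⟩, _, ⟨m, hm, rfl⟩, by simp [X, monomial_mul]⟩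
  rw [this, mem_ideal_span_monomial_image]
  refine forall₂_congr fun d _ => ?_
  constructor
  · rintro ⟨_, ⟨j, hj, m, hm, rfl⟩, h⟩
    exact ⟨j, hj, m, hm, h⟩
  · rintro ⟨j, hj, m, hm, h⟩
    exact ⟨_, ⟨j, hj, m, hm, rfl⟩, h⟩

lemma ofList_map_X {K : Type*} [Field K] {n : ℕ} (L : List (Fin n)) :
    Ideal.ofList (L.map fun i => (X i : MvPolynomial (Fin n) K)) =
      Ideal.span ((fun i => (X i : MvPolynomial (Fin n) K)) '' {j | j ∈ L}) := by
  unfold Ideal.ofList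
  congr 1
  ext g
  simp

lemma regular_step {K : Type*} [Field K] {n : ℕ} (s : ℕ) (A : ℕ → Finset (Fin n))
    (L : List (Fin n)) (y : Fin n)
    (hy : ∀ j ∈ L, ∀ i < s, j ∈ A i → y ∉ A i)
    (hL : ∀ j ∈ L, j ≠ y)
    (I : Ideal (MvPolynomial (Fin n) K)) (hI : I = ⨅ i ∈ Finset.range s, varIdeal K (A i)) :
    IsSMulRegular (I ⧸ (Ideal.ofList (L.map fun i => (X i : MvPolynomial (Fin n) K)) • ⊤ :
      Submodule (MvPolynomial (Fin n) K) I)) (X y : MvPolynomial (Fin n) K) := by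
  rw [isSMulRegular_iff_right_eq_zero_of_smul]
  intro x
  obtain ⟨f, rfl⟩ := Submodule.mkQ_surjective _ x
  intro h
  rw [← map_smul, Submodule.mkQ_apply, Submodule.Quotient.mk_eq_zero, mem_smul_top_iff,
    ofList_map_X] at h
  rw [Submodule.mkQ_apply, Submodule.Quotient.mk_eq_zero, mem_smul_top_iff, ofList_map_X]
  obtain ⟨f, hf⟩ := f
  subst hI
  rw [mem_mul_inter] at h ⊢
  rw [mem_inter_iff] at hf
  intro d hd
  have hd' : Finsupp.single y 1 + d ∈ (X y * f).support := by
    rw [mem_support_iff, coeff_X_mul]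
    exact mem_support_iff.1 hd
  obtain ⟨j, hj, m, hm, hle⟩ := h _ hd'
  have hjy := hL j hj
  have hdj : 1 ≤ d j := by
    have := hle j
    simp [hjy.symm] at this
    omega
  refine ⟨j, hj, d - Finsupp.single j 1, ?_, ?_⟩
  · intro i hi
    by_cases hji : j ∈ A i
    · obtain ⟨v, hv, h0⟩ := hm i hi
      refine ⟨v, hv, ?_⟩
      have hvy : y ≠ v := fun e => hy j hj i hi hji (e ▸ hv)
      have := hle v
      simp only [Finsupp.add_apply, Finsupp.tsub_apply, Finsupp.single_apply, hvy,
        if_false] at this ⊢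
      omega
    · obtain ⟨v, hv, h0⟩ := hf d hd i hi
      refine ⟨v, hv, ?_⟩
      have hvj : j ≠ v := fun e => hji (e ▸ hv)
      simpa [Finsupp.single_apply, hvj] using h0
  · intro v
    simp only [Finsupp.add_apply, Finsupp.tsub_apply, Finsupp.single_apply]
    split_ifs with e
    · subst e; omega
    · omega

lemma depth_inter_le {K : Type*} [Field K] {n : ℕ} (s : ℕ) (hs : 0 < s) (A : ℕ → Finset (Fin n))
    (hne : ∀ i < s, (A i).Nonempty)
    (hdis : ∀ v, ∀ i < s, ∀ j < s, v ∈ A i → v ∈ A j → i = j)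
    (hcov : ∀ v, ∃ i < s, v ∈ A i)
    (I : Ideal (MvPolynomial (Fin n) K)) (hI : I = ⨅ i ∈ Finset.range s, varIdeal K (A i)) :
    moduleDepth (MvPolynomial (Fin n) K) (maxIdeal n K) ↥I ≤ s := by
  classical
  have : Nonempty (Fin n) := ⟨(hne 0 hs).choose⟩
  choose! y hy using hne
  have hyA : ∀ i < s, ∀ j < s, y i ∈ A j → i = j := fun i hi j hj h =>
    hdis _ i hi j hj (hy i hi) h
  let E : Fin n →₀ ℕ := indE ((Finset.range s).image y)
  have hE : ∀ v, E v = if v ∈ (Finset.range s).image y then 1 else 0 := fun v => rfl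
  have hEgood : GoodE s A E := fun i hi => ⟨y i, hy i hi, by
    rw [hE, if_pos (Finset.mem_image_of_mem y (by simpa using hi))]; simp⟩
  have hEmem := monomial_mem_inter (K := K) s A E hEgood
  rw [← hI] at hEmem
  have hEnot : ∀ V : Set (Fin n), monomial E (1 : K) ∉
      Ideal.span ((fun i => (X i : MvPolynomial (Fin n) K)) '' V) * I := by
    intro V h
    rw [hI, mem_mul_inter] at h
    obtain ⟨j, -, m, hm, hle⟩ := h E (by rw [support_monomial]; simp)
    obtain ⟨i, hi, hji⟩ := hcov j
    have hAE : ∀ v ∈ A i, E v ≠ 0 → v = y i := by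
      intro v hv h0
      rw [hE] at h0
      have : v ∈ (Finset.range s).image y := by
        by_contra hc; simp [hc] at h0
      obtain ⟨i', hi', rfl⟩ := Finset.mem_image.1 this
      rw [hyA i' (by simpa using hi') i hi hv]
    have h1 := hle j
    simp only [Finsupp.add_apply, Finsupp.single_eq_same] at h1
    have hj : j = y i := hAE j hji (by omega)
    obtain ⟨v, hv, h0⟩ := hm i hi
    have h2 := hle v
    simp only [Finsupp.add_apply] at h2
    have hv' : v = y i := hAE v hv (by omega)
    have h3 : E j ≤ 1 := by rw [hE]; split_ifs <;> simp
    rw [hv', ← hj] at h0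
    omega
  let L : List (Fin n) := (List.range s).map y
  let ys : List (MvPolynomial (Fin n) K) := L.map fun i => X i
  have hlen : ys.length = s := by simp [ys, L]
  rw [← hlen]
  refine depth_le_of_socle (maxIdeal n K) I ?_ ys ?_ ⟨_, hEmem⟩ ?_ ?_
  · rw [lt_top_iff_ne_top]
    intro h
    have : (⟨_, hEmem⟩ : I) ∈ (maxIdeal n K • ⊤ : Submodule (MvPolynomial (Fin n) K) I) := by rw [h]; trivial
    rw [mem_smul_top_iff] at this
    exact hEnot _ this
  · refine ⟨fun i hi => ?_⟩
    have his : i < s := by omega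
    have e1 : ys[i] = X (y i) := by simp [ys, L]
    have e2 : ys.take i = (L.take i).map fun i => X i := by simp [ys, List.map_take]
    rw [e1, e2]
    have hmem : ∀ j ∈ L.take i, ∃ k < i, j = y k := by
      intro j hj
      simp only [L, ← List.map_take, List.take_range, List.mem_map, List.mem_range] at hj
      obtain ⟨k, hk, rfl⟩ := hj
      exact ⟨k, by omega, rfl⟩
    apply regular_step s A _ _ _ _ I hI
    · intro j hj a ha hja hya
      obtain ⟨k, hk, rfl⟩ := hmem j hj
      have := hyA k (by omega) a ha hja
      have := hyA i his a ha hya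
      omega
    · intro j hj e
      obtain ⟨k, hk, rfl⟩ := hmem j hj
      have := hyA k (by omega) i his (e ▸ hy i his)
      omega
  · rw [mem_smul_top_iff, ofList_map_X]
    exact hEnot _
  · intro g hg
    rw [mem_smul_top_iff, ofList_map_X]
    change g * monomial E 1 ∈ _
    induction hg using Submodule.span_induction with
    | zero => simp
    | add a b _ _ ha hb => rw [add_mul]; exact Ideal.add_mem _ ha hb
    | smul a b _ hb => rw [smul_eq_mul, mul_assoc]; exact Ideal.mul_mem_left _ _ hb
    | mem a ha =>
      obtain ⟨v, -, rfl⟩ := ha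
      obtain ⟨i, hi, hvi⟩ := hcov v
      have e : (fun i => (X i : MvPolynomial (Fin n) K)) v * monomial E 1 =
          X (y i) * monomial (Finsupp.single v 1 + E - Finsupp.single (y i) 1) 1 := by
        simp only [X, monomial_mul, mul_one]
        refine congrArg (fun d => monomial d (1 : K)) (Finsupp.ext fun w => ?_)
        have : E (y i) = 1 := by
          rw [hE, if_pos (Finset.mem_image_of_mem y (by simpa using hi))]
        simp only [Finsupp.add_apply, Finsupp.tsub_apply, Finsupp.single_apply (a := y i)]
        split_ifs with e
        · subst e; omega
        · omega
      rw [e]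
      refine Ideal.mul_mem_mul (Ideal.subset_span ⟨y i, ?_, rfl⟩) ?_
      · exact List.mem_map.2 ⟨i, List.mem_range.2 hi, rfl⟩
      · rw [hI]
        apply monomial_mem_inter
        intro k hk
        by_cases hki : k = i
        · subst hki
          refine ⟨v, hvi, ?_⟩
          have : v = y k → E v = 1 := by
            intro e
            rw [e, hE, if_pos (Finset.mem_image_of_mem y (by simpa using hi))]
          simp only [Finsupp.add_apply, Finsupp.tsub_apply, Finsupp.single_eq_same]
          rw [Finsupp.single_apply]
          split_ifs with e
          · have := this e.symm
            omega
          · omega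
        · refine ⟨y k, hy k hk, ?_⟩
          have h1 : E (y k) = 1 := by
            rw [hE, if_pos (Finset.mem_image_of_mem y (by simpa using hk))]
          have h2 : y i ≠ y k := fun e => hki (hyA k hk i hi (e ▸ hy i hi))
          simp only [Finsupp.add_apply, Finsupp.tsub_apply]
          rw [Finsupp.single_apply (a := y i), if_neg h2]
          omega

/-- for primes `P_i` generated by disjoint consecutive blocks of
variables partitioning all `n` variables,
`sdepth (P₁ ∩ ⋯ ∩ P_s) ≥ Σ ⌈(r_i − r_{i-1})/2⌉ ≥ s`, and in particular
`sdepth ≥ depth`, i.e. Stanley's conjecture holds. -/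
theorem sdepth_inter_disjoint_primes {K : Type*} [Field K] (n s : ℕ) (hs : 0 < s)
    (r : ℕ → ℕ) (h0 : r 0 = 0) (hn : r s = n) (hmono : ∀ i < s, r i < r (i + 1)) :
    letI I : Ideal (MvPolynomial (Fin n) K) :=
      ⨅ i ∈ Finset.range s, varIdeal K
        (Finset.univ.filter fun j : Fin n => r i ≤ (j : ℕ) ∧ (j : ℕ) < r (i + 1))
    sdepth I ≥ (∑ i ∈ Finset.range s, (r (i + 1) - r i + 1) / 2) ∧
      (∑ i ∈ Finset.range s, (r (i + 1) - r i + 1) / 2) ≥ s ∧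
      sdepth I ≥ moduleDepth (MvPolynomial (Fin n) K) (maxIdeal n K) ↥I := by
  have hle : ∀ j ≤ s, ∀ i ≤ j, r i ≤ r j := by
    intro j
    induction j with
    | zero => intro _ i hi; have : i = 0 := by omega
              rw [this]
    | succ j ih =>
      intro hj i hi
      rcases Nat.lt_or_ge i (j + 1) with h | h
      · exact (ih (by omega) i (by omega)).trans (hmono j (by omega)).le
      · have : i = j + 1 := by omega
        rw [this]
  have hn' : ∀ i < s, r (i + 1) ≤ n := fun i hi => hn ▸ hle s le_rfl (i + 1) hi
  have hdis : ∀ v i j, i < s → j < s → r i ≤ v → v < r (i + 1) → r j ≤ v → v < r (j + 1) →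
      i = j := by
    intro v i j hi hj h1 h2 h3 h4
    by_contra hne
    rcases Nat.lt_or_gt_of_ne hne with h | h
    · have := hle j hj.le (i + 1) h; omega
    · have := hle i hi.le (j + 1) h; omega
  have hcov : ∀ v < n, ∃ i < s, r i ≤ v ∧ v < r (i + 1) := by
    intro v hv
    have : ∀ t ≤ s, v < r t → ∃ i < s, r i ≤ v ∧ v < r (i + 1) := by
      intro t
      induction t with
      | zero => intro _ h; omega
      | succ t ih =>
        intro ht h
        by_cases hvt : v < r t
        · exact ih (by omega) hvt
        · exact ⟨t, by omega, by omega, h⟩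
    exact this s le_rfl (hn ▸ hv)
  let A : ℕ → Finset (Fin n) := fun i =>
    Finset.univ.filter fun j : Fin n => r i ≤ (j : ℕ) ∧ (j : ℕ) < r (i + 1)
  have hA : ∀ i (v : Fin n), v ∈ A i ↔ r i ≤ (v : ℕ) ∧ (v : ℕ) < r (i + 1) := by
    intro i v; simp [A]
  have hne : ∀ i < s, (A i).Nonempty := by
    intro i hi
    have h1 := hmono i hi
    have h2 := hn' i hi
    exact ⟨⟨r i, by omega⟩, by rw [hA]; exact ⟨le_rfl, h1⟩⟩
  have hs2 : (∑ i ∈ Finset.range s, (r (i + 1) - r i + 1) / 2) ≥ s := by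
    calc s = ∑ i ∈ Finset.range s, 1 := by simp
      _ ≤ _ := Finset.sum_le_sum fun i hi => by
        have := hmono i (by simpa using hi)
        omega
  have hbot : (⨅ i ∈ Finset.range s, varIdeal K (A i) : Ideal (MvPolynomial (Fin n) K)) ≠ ⊥ := by
    intro h
    have hg : GoodE s A (indE Finset.univ) := by
      intro i hi
      obtain ⟨v, hv⟩ := hne i hi
      exact ⟨v, hv, by simp [indE]⟩
    have := monomial_mem_inter (K := K) s A _ hg
    rw [h, Ideal.mem_bot, monomial_eq_zero] at this
    exact one_ne_zero this
  have h1 : sdepth (⨅ i ∈ Finset.range s, varIdeal K (A i) : Ideal (MvPolynomial (Fin n) K)) ≥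
      (∑ i ∈ Finset.range s, (r (i + 1) - r i + 1) / 2) := by
    apply le_sdepth _ hbot
    obtain ⟨X, Y, h⟩ := full_comb n s r hn' hdis hcov
    apply stanley_exists s A _ X Y
    simpa only [hA] using h
  refine ⟨h1, hs2, ?_⟩
  refine le_trans ?_ (hs2.le.trans h1)
  apply depth_inter_le s hs A hne _ _ _ rfl
  · intro v i hi j hj a b
    rw [hA] at a b
    exact hdis v i j hi hj a.1 a.2 b.1 b.2
  · intro v
    obtain ⟨i, hi, h⟩ := hcov v v.2
    exact ⟨i, hi, (hA i v).2 h⟩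
end

section
/- Let P_1, P_2, P_3 be three non-zero monomial prime ideals of S = K[x_1,...,x_n], none contained in another, with P_1 + P_2 + P_3 = (x_1,...,x_n), and I = P_1 ∩ P_2 ∩ P_3. If P_1 ⊆ P_2 + P_3, then depth_S(I) = n + 2 − max{ht(P_1 + P_2), ht(P_1 + P_3)}. -/
open MvPolynomial

universe u

open CategoryTheory Abelian Pointwise in
theorem dh_ext1 {R : Type u} [CommRing R] {S : ShortComplex (ModuleCat.{u} R)} (hS : S.ShortExact)
    (N : ModuleCat.{u} R) (d : ℕ) (h2 : ∀ i < d + 1, Subsingleton (Ext N S.X₂ i))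
    (h3 : ∀ i < d, Subsingleton (Ext N S.X₃ i)) :
    ∀ i < d + 1, Subsingleton (Ext N S.X₁ i) := by
  intro i hi
  have := h2 i hi
  cases i with
  | zero =>
    have := hS.mono_f
    exact (Ext.postcomp_mk₀_injective_of_mono N S.f).subsingleton
  | succ i =>
    have := h3 i (by omega)
    refine subsingleton_of_forall_eq 0 fun x => ?_
    obtain ⟨y, rfl⟩ := Ext.covariant_sequence_exact₁ N hS x (Subsingleton.elim _ _) rfl
    rw [Subsingleton.elim y 0, Ext.zero_comp]

open CategoryTheory Abelian Pointwise in
theorem dh_ext2 {R : Type u} [CommRing R] {S : ShortComplex (ModuleCat.{u} R)} (hS : S.ShortExact)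
    (N : ModuleCat.{u} R) (i : ℕ) (h1 : Subsingleton (Ext N S.X₁ i))
    (h3 : Subsingleton (Ext N S.X₃ i)) : Subsingleton (Ext N S.X₂ i) := by
  refine subsingleton_of_forall_eq 0 fun x => ?_
  obtain ⟨y, rfl⟩ := Ext.covariant_sequence_exact₂ N hS x (Subsingleton.elim _ _)
  rw [Subsingleton.elim y 0, Ext.zero_comp]

open CategoryTheory Abelian Pointwise in
theorem dh_ext3 {R : Type u} [CommRing R] {S : ShortComplex (ModuleCat.{u} R)} (hS : S.ShortExact)
    (N : ModuleCat.{u} R) (i : ℕ) (h2 : Subsingleton (Ext N S.X₂ i))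
    (h1 : Subsingleton (Ext N S.X₁ (i + 1))) : Subsingleton (Ext N S.X₃ i) := by
  refine subsingleton_of_forall_eq 0 fun x => ?_
  obtain ⟨y, rfl⟩ := Ext.covariant_sequence_exact₃ N hS x rfl (Subsingleton.elim _ _)
  rw [Subsingleton.elim y 0, Ext.zero_comp]

/-- short exact sequence of modules from linear maps -/
theorem dh_ses {R : Type u} [CommRing R] {M₁ M₂ M₃ : Type u} [AddCommGroup M₁] [AddCommGroup M₂]
    [AddCommGroup M₃] [Module R M₁] [Module R M₂] [Module R M₃] (f : M₁ →ₗ[R] M₂) (g : M₂ →ₗ[R] M₃)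
    (hf : Function.Injective f) (hfg : Function.Exact f g) (hg : Function.Surjective g) :
    (ModuleCat.shortComplexOfCompEqZero f g hfg.linearMap_comp_eq_zero).ShortExact where
  exact := ModuleCat.shortComplex_exact _ hfg
  mono_f := by simpa [ModuleCat.mono_iff_injective] using hf
  epi_g := by simpa [ModuleCat.epi_iff_surjective] using hg

open CategoryTheory Abelian Pointwise in
/-- vanishing of `Ext^i(N, M)` for `i < d` -/
def DhV {R : Type u} [CommRing R] (N : Type u) [AddCommGroup N] [Module R N]
    (M : Type u) [AddCommGroup M] [Module R M] (d : ℕ) : Prop :=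
  ∀ i < d, Subsingleton (Ext (ModuleCat.of R N) (ModuleCat.of R M) i)

open CategoryTheory Abelian Pointwise in
theorem dh_smul {R : Type u} [CommRing R] (N : Type u) [AddCommGroup N] [Module R N]
    (M : Type u) [AddCommGroup M] [Module R M] (x : R) (hx : x ∈ Module.annihilator R N)
    (hr : IsSMulRegular M x) (d : ℕ)
    (h1 : DhV (R := R) N (QuotSMulTop x M) d) (h2 : ¬ DhV (R := R) N (QuotSMulTop x M) (d + 1)) :
    DhV (R := R) N M (d + 1) ∧ ¬ DhV (R := R) N M (d + 2) := by
  have hS := IsSMulRegular.smulShortComplex_shortExact (M := ModuleCat.of R M) hr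
  have hv : DhV (R := R) N M (d + 1) := by
    intro i hi
    have hz := Ext.postcomp_smul_id_eq_zero_of_mem_annihilator (M := ModuleCat.of R M)
      (N := ModuleCat.of R N) hx i
    have hz' : ∀ y : Ext (ModuleCat.of R N) (ModuleCat.of R M) i,
        y.comp (Ext.mk₀ ((ModuleCat.of R M).smulShortComplex x).f) (add_zero i) = 0 := by
      intro y
      have := congrArg (fun φ => φ.hom y) hz
      exact this
    refine subsingleton_of_forall_eq 0 fun y => ?_
    cases i with
    | zero =>
      have := hS.mono_f
      apply Ext.postcomp_mk₀_injective_of_mono (ModuleCat.of R N)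
        ((ModuleCat.of R M).smulShortComplex x).f
      exact (hz' y).trans (map_zero ((Ext.mk₀ ((ModuleCat.of R M).smulShortComplex x).f).postcomp
        (ModuleCat.of R N) (add_zero 0))).symm
    | succ i =>
      obtain ⟨w, rfl⟩ := Ext.covariant_sequence_exact₁ _ hS y (hz' y) rfl
      have : Subsingleton (Ext (ModuleCat.of R N) (ModuleCat.of R (QuotSMulTop x M)) i) :=
        h1 i (by omega)
      have hw : w = 0 := this.elim w 0
      rw [hw, Ext.zero_comp]
      rfl
  refine ⟨hv, fun h => h2 fun i hi => ?_⟩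
  exact dh_ext3 hS _ i (hv i hi) (h (i + 1) (by omega))

theorem dh_mem_var {n : ℕ} {K : Type u} [Field K] (A : Finset (Fin n))
    (f : MvPolynomial (Fin n) K) :
    f ∈ varIdeal K A ↔ ∀ m ∈ f.support, ∃ i ∈ A, m i ≠ 0 := by
  have := mem_ideal_span_X_image (x := f) (s := (↑A : Set (Fin n)))
  simpa [varIdeal] using this

theorem dh_X_mul {n : ℕ} {K : Type u} [Field K] (A : Finset (Fin n)) (j : Fin n) (hj : j ∉ A)
    (f : MvPolynomial (Fin n) K) (h : X j * f ∈ varIdeal K A) : f ∈ varIdeal K A := by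
  rw [dh_mem_var] at h ⊢
  intro m hm
  obtain ⟨i, hi, hmi⟩ := h (Finsupp.single j 1 + m) (by
    rw [mem_support_iff] at hm ⊢
    rwa [coeff_X_mul])
  refine ⟨i, hi, ?_⟩
  have : j ≠ i := fun e => hj (e ▸ hi)
  simpa [Finsupp.single_apply, this] using hmi

theorem dh_le {n : ℕ} {K : Type u} [Field K] (A B : Finset (Fin n)) :
    varIdeal K A ≤ varIdeal K B ↔ A ⊆ B := by
  constructor
  · intro h i hi
    have : (X i : MvPolynomial (Fin n) K) ∈ varIdeal K B :=
      h (Ideal.subset_span ⟨i, hi, rfl⟩)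
    rw [dh_mem_var] at this
    obtain ⟨k, hk, hk2⟩ := this (Finsupp.single i 1) (by simp [support_X])
    have : i = k := by
      by_contra hne
      simp [Finsupp.single_apply, hne] at hk2
    exact this ▸ hk
  · intro h
    exact Ideal.span_mono (Set.image_mono (by exact_mod_cast h))

theorem dh_sup {n : ℕ} {K : Type u} [Field K] (A B : Finset (Fin n)) :
    varIdeal K A ⊔ varIdeal K B = varIdeal K (A ∪ B) := by
  simp [varIdeal, Set.image_union, Ideal.span_union]

open CategoryTheory Abelian Pointwise in
theorem dh_quot {n : ℕ} {K : Type u} [Field K] (k : ℕ) : ∀ (A : Finset (Fin n)),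
    A.card + k = n → ∀ (M : Type u) [AddCommGroup M] [Module (MvPolynomial (Fin n) K) M]
    (g : MvPolynomial (Fin n) K →ₗ[MvPolynomial (Fin n) K] M), Function.Surjective g →
    LinearMap.ker g = varIdeal K A →
    DhV (R := MvPolynomial (Fin n) K) (MvPolynomial (Fin n) K ⧸ maxIdeal n K) M k ∧
    ¬ DhV (R := MvPolynomial (Fin n) K) (MvPolynomial (Fin n) K ⧸ maxIdeal n K) M (k + 1) := by
  induction k with
  | zero =>
    intro A hA M _ _ g hg hker
    refine ⟨fun i hi => by omega, fun h => ?_⟩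
    have hA' : A = Finset.univ := by
      rw [← Finset.card_eq_iff_eq_univ]; simpa using hA
    subst hA'
    have h0 := h 0 (by omega)
    have : Subsingleton (ModuleCat.of (MvPolynomial (Fin n) K) (MvPolynomial (Fin n) K ⧸ maxIdeal n K) ⟶ ModuleCat.of (MvPolynomial (Fin n) K) M) := Ext.addEquiv₀.subsingleton_congr.mp h0
    have : Subsingleton ((MvPolynomial (Fin n) K ⧸ maxIdeal n K) →ₗ[MvPolynomial (Fin n) K] M) :=
      (ModuleCat.homAddEquiv (M := ModuleCat.of (MvPolynomial (Fin n) K)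
        (MvPolynomial (Fin n) K ⧸ maxIdeal n K))
        (N := ModuleCat.of (MvPolynomial (Fin n) K) M)).symm.subsingleton
    let φ : (MvPolynomial (Fin n) K ⧸ maxIdeal n K) →ₗ[MvPolynomial (Fin n) K] M :=
      Submodule.liftQ (maxIdeal n K) g (le_of_eq hker.symm)
    have h1 : φ (Submodule.Quotient.mk 1) = 0 := by
      rw [Subsingleton.elim φ 0]; rfl
    have h2 : (1 : MvPolynomial (Fin n) K) ∈ varIdeal K Finset.univ := by
      rw [← hker]; exact h1
    rw [dh_mem_var] at h2
    obtain ⟨i, -, hi⟩ := h2 0 (by simp)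
    exact hi rfl
  | succ k ih =>
    intro A hA M _ _ g hg hker
    obtain ⟨j, hj⟩ : ∃ j, j ∉ A := by
      by_contra! hcon
      have : A = Finset.univ := Finset.eq_univ_iff_forall.mpr hcon
      rw [this] at hA; simp at hA
    have key := ih (insert j A) (by rw [Finset.card_insert_of_notMem hj]; omega)
      (QuotSMulTop (X j : MvPolynomial (Fin n) K) M)
      ((Submodule.mkQ _).comp g) ((Submodule.mkQ_surjective _).comp hg) ?_
    · refine dh_smul _ M (X j) ?_ ?_ k key.1 key.2
      · rw [Ideal.annihilator_quotient]
        exact Ideal.subset_span ⟨j, by simp, rfl⟩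
      · rw [isSMulRegular_iff_right_eq_zero_of_smul]
        intro m hm
        obtain ⟨f, rfl⟩ := hg m
        rw [← map_smul, ← LinearMap.mem_ker, hker] at hm
        rw [← LinearMap.mem_ker, hker]
        exact dh_X_mul A j hj f hm
    · have hins : varIdeal K (insert j A) = Ideal.span {(X j : MvPolynomial (Fin n) K)} ⊔ varIdeal K A := by
        simp [varIdeal, Set.image_insert_eq, Ideal.span_insert]
      ext f
      rw [hins, ← hker]
      simp only [LinearMap.mem_ker, LinearMap.comp_apply, Submodule.mkQ_apply,
        Submodule.Quotient.mk_eq_zero, Submodule.mem_smul_pointwise_iff_exists]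
      rw [Submodule.mem_sup]
      constructor
      · rintro ⟨b, -, hb⟩
        obtain ⟨h, rfl⟩ := hg b
        refine ⟨X j * h, Ideal.mul_mem_right _ _ (Ideal.mem_span_singleton_self _), f - X j * h, ?_, by ring⟩
        rw [LinearMap.mem_ker, map_sub, ← hb, ← smul_eq_mul, map_smul, sub_self]
      · rintro ⟨y, hy, z, hz, rfl⟩
        obtain ⟨h, rfl⟩ := Ideal.mem_span_singleton.mp hy
        refine ⟨g h, trivial, ?_⟩
        rw [map_add, LinearMap.mem_ker.mp hz, add_zero, ← smul_eq_mul, map_smul]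

theorem dh_varIdeal {n : ℕ} {K : Type u} [Field K] (A : Finset (Fin n)) (hA : A.Nonempty) (k : ℕ)
    (hk : A.card + k = n) :
    DhV (R := MvPolynomial (Fin n) K) (MvPolynomial (Fin n) K ⧸ maxIdeal n K) (varIdeal K A) (k + 1) ∧
    ¬ DhV (R := MvPolynomial (Fin n) K) (MvPolynomial (Fin n) K ⧸ maxIdeal n K) (varIdeal K A) (k + 2) := by
  have hS := dh_ses (varIdeal K A).subtype (varIdeal K A).mkQ (Submodule.subtype_injective _)
    (LinearMap.exact_subtype_mkQ _) (Submodule.mkQ_surjective _)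
  have h0 := (dh_quot n ∅ (by simp) (MvPolynomial (Fin n) K) LinearMap.id Function.surjective_id
    (by simp [varIdeal])).1
  have h3 := dh_quot k A hk _ (varIdeal K A).mkQ (Submodule.mkQ_surjective _) (by simp)
  have hc := hA.card_pos
  constructor
  · exact dh_ext1 hS _ k (fun i hi => h0 i (by omega)) h3.1
  · intro h
    exact h3.2 fun i hi => dh_ext3 hS _ i (h0 i (by omega)) (h (i + 1) (by omega))

theorem dh_prod {R : Type u} [CommRing R] (N : Type u) [AddCommGroup N] [Module R N]
    (I J : Ideal R) (d : ℕ) (hI : DhV (R := R) N I d) (hJ : DhV (R := R) N J d) :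
    DhV (R := R) N (I × J) d := by
  have hS := dh_ses (LinearMap.inl R I J) (LinearMap.snd R I J) LinearMap.inl_injective
    Function.Exact.inl_snd LinearMap.snd_surjective
  exact fun i hi => dh_ext2 hS _ i (hI i hi) (hJ i hi)

theorem dh_mv {R : Type u} [CommRing R] (N : Type u) [AddCommGroup N] [Module R N]
    (I J : Ideal R) (d : ℕ) (hI : DhV (R := R) N I (d + 1)) (hJ : DhV (R := R) N J (d + 1)) :
    (DhV (R := R) N ↥(I ⊔ J) d → DhV (R := R) N ↥(I ⊓ J) (d + 1)) ∧
    (DhV (R := R) N ↥(I ⊓ J) (d + 2) → DhV (R := R) N ↥(I ⊔ J) (d + 1)) := by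
  let f : ↥(I ⊓ J) →ₗ[R] I × J :=
    (Submodule.inclusion inf_le_left).prod (Submodule.inclusion inf_le_right)
  let g : (I × J) →ₗ[R] ↥(I ⊔ J) :=
    (Submodule.inclusion le_sup_left).coprod (-(Submodule.inclusion le_sup_right))
  have hS := dh_ses f g
    (fun a b h => by
      have := congrArg (fun p => (p.1 : R)) h
      exact Subtype.ext this)
    (by
      rintro ⟨a, b⟩
      constructor
      · intro h
        have h' : (a : R) + -(b : R) = 0 := congrArg Subtype.val h
        have h'' : (a : R) = b := by rw [← sub_eq_add_neg] at h'; exact sub_eq_zero.mp h'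
        refine ⟨⟨a, a.2, h'' ▸ b.2⟩, ?_⟩
        exact Prod.ext (Subtype.ext rfl) (Subtype.ext h'')
      · rintro ⟨c, hc⟩
        rw [← hc]
        apply Subtype.ext
        show (c : R) + -(c : R) = 0
        ring)
    (by
      rintro ⟨x, hx⟩
      obtain ⟨a, ha, b, hb, rfl⟩ := Submodule.mem_sup.mp hx
      refine ⟨(⟨a, ha⟩, ⟨-b, J.neg_mem hb⟩), Subtype.ext ?_⟩
      show a + -(-b) = a + b
      ring)
  have h2 := dh_prod N I J _ hI hJ
  constructor
  · intro h
    exact dh_ext1 hS _ d h2 h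
  · intro h i hi
    exact dh_ext3 hS _ i (h2 i hi) (h (i + 1) (by omega))

theorem DhV.mono {R : Type u} [CommRing R] {N : Type u} [AddCommGroup N] [Module R N]
    {M : Type u} [AddCommGroup M] [Module R M] {d e : ℕ} (h : DhV (R := R) N M d) (hde : e ≤ d) :
    DhV (R := R) N M e := fun i hi => h i (by omega)

theorem dh_depth {n : ℕ} {K : Type u} [Field K] (I : Ideal (MvPolynomial (Fin n) K)) (hI : I ≠ ⊥)
    (d : ℕ)
    (h1 : DhV (R := MvPolynomial (Fin n) K) (MvPolynomial (Fin n) K ⧸ maxIdeal n K) I d)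
    (h2 : ¬ DhV (R := MvPolynomial (Fin n) K) (MvPolynomial (Fin n) K ⧸ maxIdeal n K) I (d + 1)) :
    moduleDepth (MvPolynomial (Fin n) K) (maxIdeal n K) I = d := by
  have hsupp : Module.support (MvPolynomial (Fin n) K) (MvPolynomial (Fin n) K ⧸ maxIdeal n K) =
      PrimeSpectrum.zeroLocus (maxIdeal n K) := by
    rw [Module.support_eq_zeroLocus, Ideal.annihilator_quotient]
  have hlt : maxIdeal n K • (⊤ : Submodule (MvPolynomial (Fin n) K) I) < ⊤ := by
    rw [lt_top_iff_ne_top]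
    intro he
    obtain ⟨r, hr, hr2⟩ := Submodule.exists_sub_one_mem_and_smul_eq_zero_of_fg_of_le_smul
      (maxIdeal n K) (⊤ : Submodule (MvPolynomial (Fin n) K) I) (IsNoetherian.noetherian _) he.ge
    obtain ⟨f, hf, hf0⟩ := Submodule.exists_mem_ne_zero_of_ne_bot hI
    have h0 : r * f = 0 := congrArg Subtype.val (hr2 ⟨f, hf⟩ trivial)
    have hr0 : r = 0 := (mul_eq_zero.mp h0).resolve_right hf0
    have h1 : (1 : MvPolynomial (Fin n) K) ∈ varIdeal K Finset.univ := by
      have := (maxIdeal n K).neg_mem hr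
      simpa [hr0, maxIdeal] using this
    rw [dh_mem_var] at h1
    obtain ⟨i, -, hi⟩ := h1 0 (by simp)
    exact hi rfl
  have hiff : ∀ k, (∃ rs : List (MvPolynomial (Fin n) K), rs.length = k ∧
      (∀ r ∈ rs, r ∈ maxIdeal n K) ∧ RingTheory.Sequence.IsRegular I rs) ↔ k ≤ d := by
    intro k
    constructor
    · rintro ⟨rs, rfl, hm, hreg⟩
      by_contra hlt'
      apply h2
      intro i hi
      exact ModuleCat.subsingleton_ext_of_exists_isRegular (maxIdeal n K)
        (ModuleCat.of (MvPolynomial (Fin n) K) (MvPolynomial (Fin n) K ⧸ maxIdeal n K)) hsupp.le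
        (ModuleCat.of (MvPolynomial (Fin n) K) I) hlt rs hm hreg i (by omega)
    · intro hk
      exact ModuleCat.exists_isRegular_of_exists_subsingleton_ext (maxIdeal n K) k
        (ModuleCat.of (MvPolynomial (Fin n) K) I) hlt
        (ModuleCat.of (MvPolynomial (Fin n) K) (MvPolynomial (Fin n) K ⧸ maxIdeal n K)) hsupp
        (fun i hi => h1 i (by omega))
  unfold moduleDepth
  simp only [hiff]
  exact csSup_Iic

theorem dh_core {n : ℕ} {K : Type u} [Field K] (A1 A2 A3 : Finset (Fin n))
    (h12 : ¬ A1 ⊆ A2) (h21 : ¬ A2 ⊆ A1) (h13 : ¬ A1 ⊆ A3) (h23 : ¬ A2 ⊆ A3)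
    (hsub : A1 ⊆ A2 ∪ A3) (h3 : A3.Nonempty)
    (hab : (A1 ∪ A2).card ≤ (A1 ∪ A3).card) :
    moduleDepth (MvPolynomial (Fin n) K) (maxIdeal n K)
      ↥(varIdeal K A1 ⊓ varIdeal K A2 ⊓ varIdeal K A3) = n + 2 - (A1 ∪ A3).card := by
  have c1 : A1.card < (A1 ∪ A2).card := Finset.card_lt_card
    (Finset.ssubset_iff_subset_ne.mpr ⟨Finset.subset_union_left, fun e =>
      h21 (e ▸ Finset.subset_union_right)⟩)
  have c2 : A2.card < (A1 ∪ A2).card := Finset.card_lt_card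
    (Finset.ssubset_iff_subset_ne.mpr ⟨Finset.subset_union_right, fun e =>
      h12 (e ▸ Finset.subset_union_left)⟩)
  have c3 : A3.card < (A1 ∪ A3).card := Finset.card_lt_card
    (Finset.ssubset_iff_subset_ne.mpr ⟨Finset.subset_union_right, fun e =>
      h13 (e ▸ Finset.subset_union_left)⟩)
  have cn : (A1 ∪ A3).card ≤ n := by simpa using Finset.card_le_univ (A1 ∪ A3)
  have n1 : A1.Nonempty := Finset.nonempty_iff_ne_empty.mpr fun e => h12 (by simp [e])
  have n2 : A2.Nonempty := Finset.nonempty_iff_ne_empty.mpr fun e => h21 (by simp [e])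
  obtain ⟨k1, e1⟩ : ∃ k, A1.card + k = n := ⟨n - A1.card, by omega⟩
  obtain ⟨k2, e2⟩ : ∃ k, A2.card + k = n := ⟨n - A2.card, by omega⟩
  obtain ⟨k3, e3⟩ : ∃ k, A3.card + k = n := ⟨n - A3.card, by omega⟩
  obtain ⟨ka, ea⟩ : ∃ k, (A1 ∪ A2).card + k = n := ⟨n - (A1 ∪ A2).card, by omega⟩
  obtain ⟨kb, eb⟩ : ∃ k, (A1 ∪ A3).card + k = n := ⟨n - (A1 ∪ A3).card, by omega⟩
  have d1 := dh_varIdeal (K := K) A1 n1 k1 e1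
  have d2 := dh_varIdeal (K := K) A2 n2 k2 e2
  have d3 := dh_varIdeal (K := K) A3 h3 k3 e3
  have da := dh_varIdeal (K := K) (A1 ∪ A2) n1.inl ka ea
  have db := dh_varIdeal (K := K) (A1 ∪ A3) n1.inl kb eb
  rw [← dh_sup] at da db
  have d12 := (dh_mv _ (varIdeal K A1) (varIdeal K A2) (ka + 1) (d1.1.mono (by omega))
    (d2.1.mono (by omega))).1 da.1
  have hsum : (varIdeal K A1 ⊓ varIdeal K A2) ⊔ varIdeal K A3 = varIdeal K A1 ⊔ varIdeal K A3 := by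
    apply le_antisymm
    · exact sup_le_sup_right inf_le_left _
    · refine sup_le ?_ le_sup_right
      refine Ideal.span_le.mpr ?_
      rintro _ ⟨i, hi, rfl⟩
      rcases Finset.mem_union.mp (hsub hi) with h | h
      · exact Ideal.mem_sup_left ⟨Ideal.subset_span ⟨i, hi, rfl⟩, Ideal.subset_span ⟨i, h, rfl⟩⟩
      · exact Ideal.mem_sup_right (Ideal.subset_span ⟨i, h, rfl⟩)
  have dI := dh_mv _ (varIdeal K A1 ⊓ varIdeal K A2) (varIdeal K A3) (kb + 1)
    (d12.mono (by omega)) (d3.1.mono (by omega))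
  rw [hsum] at dI
  have hne : ∀ A : Finset (Fin n), A.Nonempty → varIdeal K A ≠ ⊥ := by
    rintro A ⟨i, hi⟩ e
    have : (X i : MvPolynomial (Fin n) K) ∈ varIdeal K A := Ideal.subset_span ⟨i, hi, rfl⟩
    rw [e] at this
    exact X_ne_zero i ((Submodule.mem_bot _).mp this)
  have hI : varIdeal K A1 ⊓ varIdeal K A2 ⊓ varIdeal K A3 ≠ ⊥ := by
    intro e
    have h := Ideal.mul_le_inf (I := varIdeal K A1 ⊓ varIdeal K A2) (J := varIdeal K A3)
    rw [e, le_bot_iff, Ideal.mul_eq_bot] at h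
    rcases h with h | h
    · have h' := Ideal.mul_le_inf (I := varIdeal K A1) (J := varIdeal K A2)
      rw [h, le_bot_iff, Ideal.mul_eq_bot] at h'
      rcases h' with h' | h'
      · exact hne _ n1 h'
      · exact hne _ n2 h'
    · exact hne _ h3 h
  have := dh_depth _ hI (kb + 2) (dI.1 db.1) (fun h => db.2 (dI.2 h))
  rw [this]
  omega

/-- for three pairwise incomparable nonzero monomial primes with
`P₁+P₂+P₃ = (x₁,…,xₙ)` and `P₁ ⊆ P₂+P₃`,
`depth (P₁ ∩ P₂ ∩ P₃) = n + 2 − max{ht(P₁+P₂), ht(P₁+P₃)}`. -/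
theorem depth_inter_three_primes_degenerate {K : Type*} [Field K] (n : ℕ)
    (A1 A2 A3 : Finset (Fin n)) :
    letI P1 : Ideal (MvPolynomial (Fin n) K) := varIdeal K A1
    letI P2 : Ideal (MvPolynomial (Fin n) K) := varIdeal K A2
    letI P3 : Ideal (MvPolynomial (Fin n) K) := varIdeal K A3
    P1 ≠ ⊥ → P2 ≠ ⊥ → P3 ≠ ⊥ →
    ¬P1 ≤ P2 → ¬P2 ≤ P1 → ¬P1 ≤ P3 → ¬P3 ≤ P1 → ¬P2 ≤ P3 → ¬P3 ≤ P2 →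
    P1 ⊔ P2 ⊔ P3 = maxIdeal n K →
    P1 ≤ P2 ⊔ P3 →
    moduleDepth (MvPolynomial (Fin n) K) (maxIdeal n K) ↥(P1 ⊓ P2 ⊓ P3) =
      n + 2 - max ((A1 ∪ A2).card) ((A1 ∪ A3).card) := by
  intro h1 h2 h3 h12 h21 h13 h31 h23 h32 _ hsub
  rw [dh_sup] at hsub
  rw [dh_le] at h12 h21 h13 h31 h23 h32 hsub
  have n2 : A2.Nonempty := Finset.nonempty_iff_ne_empty.mpr fun e => h21 (by simp [e])
  have n3 : A3.Nonempty := Finset.nonempty_iff_ne_empty.mpr fun e => h31 (by simp [e])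
  rcases le_total ((A1 ∪ A2).card) ((A1 ∪ A3).card) with hab | hab
  · rw [max_eq_right hab]
    exact dh_core A1 A2 A3 h12 h21 h13 h23 hsub n3 hab
  · rw [max_eq_left hab, inf_right_comm]
    exact dh_core A1 A3 A2 h13 h31 h12 h32 (by rwa [Finset.union_comm]) n2 hab
end

section
/- Let P_1, P_2, P_3 be three non-zero monomial prime ideals of S = K[x_1,...,x_n], none contained in another, and I = P_1 ∩ P_2 ∩ P_3. Then sdepth_S(I) ≥ depth_S(I), i.e., Stanley's Conjecture holds for intersections of three monomial prime ideals. -/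
open MvPolynomial

section Koszul

/-- ordered Koszul differential, evaluated at a list -/
def kd {R M ι : Type*} [CommRing R] [AddCommGroup M] [Module R M] (x : ι → R) :
    List ι → (List ι → M) → M
  | [], _ => 0
  | j :: t, c => x j • c t - kd x t (fun s => c (j :: s))

variable {R M M' ι : Type*} [CommRing R] [AddCommGroup M] [Module R M]
  [AddCommGroup M'] [Module R M'] (x : ι → R)

lemma kd_sum (t : List ι) (c : List ι → M) :
    kd x t c = ∑ p : Fin t.length, (-1 : R) ^ (p : ℕ) • x (t.get p) • c (t.eraseIdx p) := by
  induction t generalizing c with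
  | nil => simp [kd]
  | cons j t ih =>
    rw [kd, ih]
    refine Eq.trans ?_ (Fin.sum_univ_succ (n := t.length) _).symm
    simp [pow_succ, sub_eq_add_neg]

lemma kd_add (t : List ι) (c c' : List ι → M) :
    kd x t (fun s => c s + c' s) = kd x t c + kd x t c' := by
  simp [kd_sum, Finset.sum_add_distrib]

lemma kd_sub (t : List ι) (c c' : List ι → M) :
    kd x t (fun s => c s - c' s) = kd x t c - kd x t c' := by
  simp [kd_sum, Finset.sum_sub_distrib, smul_sub]

lemma kd_smul (t : List ι) (r : R) (c : List ι → M) :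
    kd x t (fun s => r • c s) = r • kd x t c := by
  simp only [kd_sum, Finset.smul_sum]
  refine Finset.sum_congr rfl fun p _ => ?_
  simp only [smul_smul]; congr 1; ring

lemma kd_zero (t : List ι) : kd x t (fun _ => (0 : M)) = 0 := by
  simp [kd_sum]

lemma kd_fsum {J : Type*} (u : Finset J) (t : List ι) (c : J → List ι → M) :
    kd x t (fun s => ∑ j ∈ u, c j s) = ∑ j ∈ u, kd x t (c j) := by
  classical
  induction u using Finset.induction_on with
  | empty => simp [kd_zero]
  | insert a u ha ih => simp [Finset.sum_insert ha, kd_add, ih]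

lemma kd_map (f : M →ₗ[R] M') (t : List ι) (c : List ι → M) :
    kd x t (fun s => f (c s)) = f (kd x t c) := by
  simp [kd_sum]

lemma kd_congr {t : List ι} {c c' : List ι → M}
    (h : ∀ p < t.length, c (t.eraseIdx p) = c' (t.eraseIdx p)) : kd x t c = kd x t c' := by
  simp only [kd_sum]
  exact Finset.sum_congr rfl fun p _ => by rw [h p p.2]

lemma kd_kd (t : List ι) (c : List ι → M) : kd x t (fun s => kd x s c) = 0 := by
  induction t generalizing c with
  | nil => rfl
  | cons j t ih =>
    rw [kd]
    have : (fun s => kd x (j :: s) c) =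
        fun s => x j • c s - kd x s (fun s => c (j :: s)) := rfl
    rw [this, kd_sub, kd_smul, ih]
    simp

/-- exactness at spot `i` -/
def KEx (M : Type*) [AddCommGroup M] [Module R M] (i : ℕ) : Prop :=
  ∀ c : List ι → M, (∀ t, t.length = i + 1 → kd x t c = 0) →
    ∃ b : List ι → M, ∀ t, t.length = i → c t = kd x t b

lemma KEx_of_regular [Fintype ι] (rs : List R) :
    ∀ (M : Type _) [AddCommGroup M] [Module R M],
    (∀ r ∈ rs, ∃ a : ι → R, r = ∑ j, a j * x j) →
    RingTheory.Sequence.IsWeaklyRegular M rs →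
    ∀ i < rs.length, KEx x M i := by
  induction rs with
  | nil => intro M _ _ _ _ i hi; simp at hi
  | cons r rs ih =>
    intro M _ _ hr hreg i hi c hc
    rw [RingTheory.Sequence.isWeaklyRegular_cons_iff] at hreg
    obtain ⟨h1, h2⟩ := hreg
    obtain ⟨a, ha⟩ := hr r (by simp)
    have hb : ∀ t, t.length = i →
        kd x t (fun s => ∑ j, a j • c (j :: s)) = r • c t := by
      intro t ht
      rw [kd_fsum, ha, Finset.sum_smul]
      refine Finset.sum_congr rfl fun j _ => ?_
      rw [kd_smul, mul_smul]
      congr 1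
      have := hc (j :: t) (by simp [ht])
      rw [kd, sub_eq_zero] at this
      exact this.symm
    set b : List ι → M := fun s => ∑ j, a j • c (j :: s) with hbdef
    cases i with
    | zero =>
      refine ⟨fun _ => 0, fun t ht => ?_⟩
      rw [kd_zero]
      have := hb t ht
      rw [List.length_eq_zero_iff] at ht
      subst ht
      rw [kd] at this
      exact h1 (by simpa using this.symm)
    | succ i =>
      have IH := ih (QuotSMulTop r M) (fun s hs => hr s (by simp [hs])) h2 i
        (by simpa using hi)
      obtain ⟨e, he⟩ := IH (fun s => (Submodule.mkQ _ (b s) : QuotSMulTop r M)) (by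
        intro t ht
        rw [kd_map, hb t ht]
        simp only [Submodule.mkQ_apply, Submodule.Quotient.mk_eq_zero]
        exact Submodule.smul_mem_pointwise_smul _ _ _ trivial)
      choose e' he' using fun s => Submodule.mkQ_surjective _ (e s)
      have hx : ∀ t, ∃ m : M, t.length = i → b t - kd x t e' = r • m := by
        intro t
        by_cases ht : t.length = i
        · have h3 := he t ht
          have h4 : (fun s => e s) = fun s => Submodule.mkQ _ (e' s) := by
            funext s; rw [he']
          change _ = kd x t (fun s => e s) at h3
          rw [h4, kd_map, ← sub_eq_zero, ← map_sub] at h3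
          simp only [Submodule.mkQ_apply, Submodule.Quotient.mk_eq_zero] at h3
          obtain ⟨m, -, hm⟩ := h3
          exact ⟨m, fun _ => hm.symm⟩
        · exact ⟨0, fun h => absurd h ht⟩
      choose b' hb' using hx
      refine ⟨b', fun t ht => h1 ?_⟩
      change r • c t = r • _
      rw [← hb t ht, ← kd_smul]
      have : kd x t b = kd x t (fun s => kd x s e' + r • b' s) := by
        apply kd_congr
        intro p hp
        rw [← hb' _ (by rw [List.length_eraseIdx_of_lt hp]; omega)]
        abel
      rw [this, kd_add, kd_kd, zero_add]

end Koszul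

section Comb

variable {n : ℕ} {K : Type*} [Field K]

/-- the support condition -/
def KP (𝒜 : Fin 3 → Finset (Fin n)) (Y : Finset (Fin n)) (t : List (Fin n)) : Prop :=
  Y.val ≤ (t : Multiset (Fin n)) ∧ ∀ l, ∃ a ∈ (t : Multiset (Fin n)) - Y.val, a ∈ 𝒜 l

/-- the combinatorial differential -/
def kδ (t : List (Fin n)) (c : List (Fin n) → K) : K := kd (fun _ => (1 : K)) t c

/-- combinatorial exactness -/
def CEx (K : Type*) [Field K] (𝒜 : Fin 3 → Finset (Fin n)) (Y N : Finset (Fin n)) (i : ℕ) : Prop :=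
  ∀ lam : List (Fin n) → K, (∀ t, ¬ KP 𝒜 Y t → lam t = 0) →
    (∀ t, (∀ j ∈ t, j ∉ N) → t.length = i + 1 → kδ t lam = 0) →
    ∃ mu : List (Fin n) → K, (∀ t, ¬ KP 𝒜 Y t → mu t = 0) ∧
      ∀ t, (∀ j ∈ t, j ∉ N) → t.length = i → lam t = kδ t mu

lemma coe_eraseIdx (t : List (Fin n)) (p : Fin t.length) :
    (t : Multiset (Fin n)) = t.get p ::ₘ (t.eraseIdx p : Multiset (Fin n)) := by
  rw [Multiset.cons_coe, Multiset.coe_eq_coe]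
  exact (List.getElem_cons_eraseIdx_perm p.2).symm

lemma CEx_step (𝒜 : Fin 3 → Finset (Fin n)) (Y N : Finset (Fin n)) (y : Fin n)
    (hyY : y ∉ Y) (i : ℕ) (h1 : CEx K 𝒜 (insert y Y) N (i + 1))
    (h0 : CEx K 𝒜 Y N i) : CEx K 𝒜 Y (insert y N) i := by
  classical
  intro lam hl hd
  set lam' : List (Fin n) → K := fun t => if y ∈ t then 0 else lam t with hlam'
  set kap : List (Fin n) → K := fun t =>
    if (∀ j ∈ t, j ∉ N) ∧ t.length = i + 1 then kδ t lam' else 0 with hkap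
  have hPP : ∀ t, KP 𝒜 (insert y Y) t → KP 𝒜 Y t ∧ y ∈ t := by
    rintro t ⟨ha, hb⟩
    have hle : Y.val ≤ (insert y Y).val := Finset.val_le_iff.2 (Finset.subset_insert _ _)
    refine ⟨⟨hle.trans ha, fun l => ?_⟩, ?_⟩
    · obtain ⟨a, h, h'⟩ := hb l
      exact ⟨a, Multiset.mem_of_le (tsub_le_tsub_left hle _) h, h'⟩
    · have := Multiset.mem_of_le ha (show y ∈ (insert y Y).val from Finset.mem_insert_self _ _)
      simpa using this
  obtain ⟨e, he, he'⟩ := h1 kap (by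
      intro t ht
      by_contra hne
      have hc : (∀ j ∈ t, j ∉ N) ∧ t.length = i + 1 := by
        by_contra hc; exact hne (by simp [hkap, hc])
      have hne' : kδ t lam' ≠ 0 := by
        intro h; apply hne; simp only [hkap]; rw [if_pos hc, h]
      have hyt : y ∈ t := by
        by_contra hyt
        apply hne'
        rw [← hd t (by
          intro j hj hjN
          rcases Finset.mem_insert.1 hjN with rfl | h
          · exact hyt hj
          · exact hc.1 j hj h) hc.2]
        apply kd_congr
        intro p hp
        have : y ∉ t.eraseIdx p := fun h => hyt (List.mem_of_mem_eraseIdx h)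
        simp [hlam', this]
      have : ∃ p : Fin t.length, lam' (t.eraseIdx p) ≠ 0 := by
        by_contra hall
        push Not at hall
        apply hne'
        rw [kδ, kd_sum]
        exact Finset.sum_eq_zero fun p _ => by simp [hall p]
      obtain ⟨p, hp⟩ := this
      have hyn : y ∉ t.eraseIdx p := by
        intro h; exact hp (by simp [hlam', h])
      have hKP : KP 𝒜 Y (t.eraseIdx p) := by
        by_contra h
        exact hp (by simp [hlam', hl _ h])
      have hcoe := coe_eraseIdx t p
      have hgy : t.get p = y := by
        have : y ∈ (t : Multiset (Fin n)) := by simpa using hyt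
        rw [hcoe, Multiset.mem_cons] at this
        rcases this with h | h
        · exact h.symm
        · exact absurd (by simpa using h) hyn
      rw [hgy] at hcoe
      apply ht
      have hins : (insert y Y).val = y ::ₘ Y.val := Finset.insert_val_of_notMem hyY
      constructor
      · rw [hins, hcoe]; exact Multiset.cons_le_cons _ hKP.1
      · intro l
        rw [hins, hcoe]
        have : (y ::ₘ (t.eraseIdx p : Multiset (Fin n))) - (y ::ₘ Y.val)
          = (t.eraseIdx p : Multiset (Fin n)) - Y.val := by
          simp [Multiset.sub_cons]
        rw [this]
        exact hKP.2 l)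
    (by
      intro t ht htl
      rw [kδ, kd_congr (c' := fun s => kδ s lam'), ]
      · exact kd_kd _ _ _
      · intro p hp
        simp only [hkap]
        rw [if_pos]
        refine ⟨fun j hj => ht j (List.mem_of_mem_eraseIdx hj), ?_⟩
        rw [List.length_eraseIdx_of_lt hp]; omega)
  obtain ⟨mu, hmu, hmu'⟩ := h0 (fun t => lam' t - e t) (by
      intro t ht
      have h1 : lam t = 0 := hl t ht
      have h2 : e t = 0 := he t fun h => ht (hPP t h).1
      simp [hlam', h1, h2])
    (by
      intro t ht htl
      rw [kδ, kd_sub]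
      have := he' t ht htl
      simp only [hkap] at this
      rw [if_pos ⟨ht, htl⟩] at this
      rw [kδ, kδ] at this
      rw [this, sub_self])
  refine ⟨mu, hmu, fun t ht htl => ?_⟩
  have hyt : y ∉ t := fun h => ht y h (Finset.mem_insert_self _ _)
  rw [← hmu' t (fun j hj hN => ht j hj (Finset.mem_insert_of_mem hN)) htl]
  have h2 : e t = 0 := he t fun h => hyt (hPP t h).2
  simp [hlam', hyt, h2]

lemma CEx_all (𝒜 : Fin 3 → Finset (Fin n)) (k : ℕ)
    (h : ∀ Y, ∀ i < k, CEx K 𝒜 Y ∅ i) (N : Finset (Fin n)) :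
    ∀ Y, Disjoint Y N → ∀ i, i + N.card < k → CEx K 𝒜 Y N i := by
  classical
  induction N using Finset.induction_on with
  | empty => intro Y _ i hi; exact h Y i (by simpa using hi)
  | insert y N hy ih =>
    intro Y hY i hi
    rw [Finset.card_insert_of_notMem hy] at hi
    rw [Finset.disjoint_insert_right] at hY
    refine CEx_step 𝒜 Y N y hY.1 i (ih _ ?_ _ (by omega)) (ih _ hY.2 _ (by omega))
    rw [Finset.disjoint_insert_left]
    exact ⟨hy, hY.2⟩

lemma mem_I_iff (𝒜 : Fin 3 → Finset (Fin n)) (f : MvPolynomial (Fin n) K) :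
    f ∈ varIdeal K (𝒜 0) ⊓ varIdeal K (𝒜 1) ⊓ varIdeal K (𝒜 2) ↔
      ∀ m ∈ f.support, ∀ l, ∃ a ∈ 𝒜 l, m a ≠ 0 := by
  simp only [Submodule.mem_inf, varIdeal]
  erw [mem_ideal_span_X_image, mem_ideal_span_X_image, mem_ideal_span_X_image]
  simp only [Fin.forall_fin_succ, Finset.mem_coe]
  constructor
  · rintro ⟨⟨h0, h1⟩, h2⟩ m hm
    exact ⟨h0 m hm, h1 m hm, h2 m hm, fun i => i.elim0⟩
  · intro h
    exact ⟨⟨fun m hm => (h m hm).1, fun m hm => (h m hm).2.1⟩, fun m hm => (h m hm).2.2.1⟩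

/-- exponent of a list -/
noncomputable def kexp (Y : Finset (Fin n)) (t : List (Fin n)) : Fin n →₀ ℕ :=
  Multiset.toFinsupp ((t : Multiset (Fin n)) - Y.val)

lemma kexp_ne (Y : Finset (Fin n)) (t : List (Fin n)) (a : Fin n) :
    kexp Y t a ≠ 0 ↔ a ∈ (t : Multiset (Fin n)) - Y.val := by
  rw [kexp, Multiset.toFinsupp_apply, Multiset.count_ne_zero]

lemma kexp_erase (Y : Finset (Fin n)) (t : List (Fin n)) (p : Fin t.length)
    (h : Y.val ≤ (t.eraseIdx p : Multiset (Fin n))) :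
    kexp Y t = Finsupp.single (t.get p) 1 + kexp Y (t.eraseIdx p) := by
  rw [kexp, kexp, coe_eraseIdx t p, Multiset.cons_sub_of_le _ h, ← Multiset.singleton_add, map_add,
    Multiset.toFinsupp_singleton]

lemma kexp_zero (Y : Finset (Fin n)) (t : List (Fin n)) (p : Fin t.length)
    (hY : Y.val ≤ (t : Multiset (Fin n)))
    (h : ¬ Y.val ≤ (t.eraseIdx p : Multiset (Fin n))) :
    kexp Y t (t.get p) = 0 := by
  by_contra h0
  apply h
  have hc := coe_eraseIdx t p
  rw [kexp, Multiset.toFinsupp_apply, Multiset.count_sub] at h0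
  rw [Multiset.le_iff_count] at hY ⊢
  intro a
  have h1 := hY a
  rw [hc] at h1 h0
  rw [Multiset.count_cons] at h1
  split_ifs at h1 with ha
  · subst ha
    rw [Multiset.count_cons_self] at h0
    omega
  · omega

lemma CEx_of_KEx (𝒜 : Fin 3 → Finset (Fin n)) (Y : Finset (Fin n)) (i : ℕ)
    (h : KEx (fun j => (X j : MvPolynomial (Fin n) K))
      ↥(varIdeal K (𝒜 0) ⊓ varIdeal K (𝒜 1) ⊓ varIdeal K (𝒜 2)) i) :
    CEx K 𝒜 Y ∅ i := by
  classical
  intro lam hl hd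
  set I := varIdeal K (𝒜 0) ⊓ varIdeal K (𝒜 1) ⊓ varIdeal K (𝒜 2) with hI
  have hmem : ∀ t, monomial (kexp Y t) (lam t) ∈ I := by
    intro t
    rw [hI, mem_I_iff]
    intro m hm l
    by_cases hP : KP 𝒜 Y t
    · have := Finset.mem_of_subset support_monomial_subset hm
      rw [Finset.mem_singleton] at this
      subst this
      obtain ⟨a, ha, ha'⟩ := hP.2 l
      exact ⟨a, ha', (kexp_ne _ _ _).2 ha⟩
    · rw [hl t hP] at hm
      simp at hm
  obtain ⟨b, hb⟩ := h (fun t => ⟨monomial (kexp Y t) (lam t), hmem t⟩) (by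
    intro t ht
    apply Subtype.ext
    change I.subtype _ = 0
    rw [← kd_map, kd_sum]
    have hterm : ∀ p : Fin t.length,
        (-1 : MvPolynomial (Fin n) K) ^ (p : ℕ) • (X (t.get p) : MvPolynomial (Fin n) K) •
          (monomial (kexp Y (t.eraseIdx p)) (lam (t.eraseIdx p)))
        = monomial (kexp Y t) ((-1 : K) ^ (p : ℕ) • (1 : K) • lam (t.eraseIdx p)) := by
      intro p
      by_cases hP : KP 𝒜 Y (t.eraseIdx p)
      · rw [kexp_erase Y t p hP.1, smul_eq_mul, smul_eq_mul, X, monomial_mul]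
        have : ((-1 : MvPolynomial (Fin n) K) ^ (p : ℕ)) = C ((-1 : K) ^ (p : ℕ)) := by simp
        rw [this, C_mul_monomial]
        simp
      · rw [hl _ hP]; simp
    have := hd t (by simp) ht
    rw [kδ, kd_sum] at this
    change ∑ p : Fin t.length, (-1 : MvPolynomial (Fin n) K) ^ (p : ℕ) •
      (X (t.get p) : MvPolynomial (Fin n) K) •
          (monomial (kexp Y (t.eraseIdx p)) (lam (t.eraseIdx p))) = 0
    rw [Finset.sum_congr rfl fun p _ => hterm p, ← map_sum, this, map_zero])
  refine ⟨fun t => if KP 𝒜 Y t then coeff (kexp Y t) (b t : MvPolynomial (Fin n) K) else 0,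
    fun t ht => by simp [ht], fun t _ ht => ?_⟩
  by_cases hY : Y.val ≤ (t : Multiset (Fin n))
  · have h1 : lam t = coeff (kexp Y t) (monomial (kexp Y t) (lam t)) := by simp
    have h2 := congrArg (I.subtype) (hb t ht)
    rw [← kd_map] at h2
    change monomial (kexp Y t) (lam t) = _ at h2
    rw [h1, h2, kδ, kd_sum, kd_sum, coeff_sum]
    refine Finset.sum_congr rfl fun p _ => ?_
    have : ((-1 : MvPolynomial (Fin n) K) ^ (p : ℕ)) = C ((-1 : K) ^ (p : ℕ)) := by simp
    rw [this, smul_eq_mul, smul_eq_mul, coeff_C_mul, smul_eq_mul, one_smul]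
    congr 1
    change coeff _ (X _ * (b (t.eraseIdx p) : MvPolynomial (Fin n) K)) = _
    by_cases hYp : Y.val ≤ (t.eraseIdx p : Multiset (Fin n))
    · rw [kexp_erase Y t p hYp, coeff_X_mul]
      split_ifs with hP
      · rfl
      · by_contra hne
        apply hP
        refine ⟨hYp, fun l => ?_⟩
        have := (mem_I_iff 𝒜 _).1 (b (t.eraseIdx p)).2 _ (mem_support_iff.2 hne) l
        obtain ⟨a, ha, ha'⟩ := this
        exact ⟨a, (kexp_ne _ _ _).1 ha', ha⟩
    · rw [if_neg (fun hP => hYp hP.1), coeff_X_mul', if_neg]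
      rw [Finsupp.mem_support_iff, not_not]
      exact kexp_zero Y t p hY hYp
  · rw [hl t (fun hP => hY hP.1), kδ, kd_sum]
    symm
    apply Finset.sum_eq_zero
    intro p _
    rw [if_neg]
    · simp
    · intro hP
      apply hY
      rw [coe_eraseIdx t p]
      exact hP.1.trans (Multiset.le_cons_self _ _)

lemma CEx_of_regular (𝒜 : Fin 3 → Finset (Fin n)) (rs : List (MvPolynomial (Fin n) K))
    (hrs : ∀ r ∈ rs, r ∈ maxIdeal n K)
    (hreg : RingTheory.Sequence.IsWeaklyRegular
      ↥(varIdeal K (𝒜 0) ⊓ varIdeal K (𝒜 1) ⊓ varIdeal K (𝒜 2)) rs)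
    (N : Finset (Fin n)) (i : ℕ) (hi : i + N.card < rs.length) : CEx K 𝒜 ∅ N i := by
  refine CEx_all 𝒜 rs.length (fun Y i hi => CEx_of_KEx 𝒜 Y i ?_) N ∅ (by simp) i hi
  refine KEx_of_regular _ rs _ ?_ hreg i hi
  intro r hr
  have := hrs r hr
  rw [maxIdeal, varIdeal, Finset.coe_univ, Set.image_univ, Ideal.mem_span_range_iff_exists_fun] at this
  obtain ⟨c, hc⟩ := this
  exact ⟨c, hc.symm⟩

end Comb

section Upper

variable {n : ℕ} {K : Type*} [Field K]

lemma KP_empty (𝒜 : Fin 3 → Finset (Fin n)) (t : List (Fin n)) :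
    KP 𝒜 ∅ t ↔ ∀ l, ∃ a ∈ t, a ∈ 𝒜 l := by
  simp [KP]

lemma CEx_false (𝒜 : Fin 3 → Finset (Fin n)) (N : Finset (Fin n)) (i : ℕ)
    (h : CEx K 𝒜 ∅ N i) (E : List (Fin n) → K)
    (hE : ∀ s, (∀ j ∈ s, j ∉ N) → s.length = i → ¬ KP 𝒜 ∅ s → kδ s E = 0)
    (s0 : List (Fin n)) (hN : ∀ j ∈ s0, j ∉ N) (hs0 : s0.length = i) (hne : kδ s0 E ≠ 0)
    (hf : ∀ p < s0.length, ¬ KP 𝒜 ∅ (s0.eraseIdx p)) : False := by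
  classical
  obtain ⟨mu, hmu, hmu'⟩ := h (fun t => if KP 𝒜 ∅ t then kδ t E else 0)
    (fun t ht => by simp [ht]) (by
      intro t ht htl
      rw [kδ, kd_congr (c' := fun s => kδ s E)]
      · exact kd_kd _ _ _
      · intro p hp
        split_ifs with hP
        · rfl
        · symm
          apply hE _ _ _ hP
          · exact fun j hj => ht j (List.mem_of_mem_eraseIdx hj)
          · rw [List.length_eraseIdx_of_lt hp]; omega)
  have h1 := hmu' s0 hN hs0
  have h2 : kδ s0 mu = 0 := by
    rw [kδ, kd_congr (c' := fun _ => 0)]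
    · exact kd_zero _ _
    · intro p hp; exact hmu _ (hf p hp)
  rw [h2] at h1
  by_cases hP : KP 𝒜 ∅ s0
  · simp only [hP, if_true] at h1
    exact hne h1
  · exact hne (hE s0 hN hs0 hP)

lemma upperBC (𝒜 : Fin 3 → Finset (Fin n)) (i j k : Fin 3) (hijk : ∀ l, l = i ∨ l = j ∨ l = k)
    (hsub : ∀ v, v ∉ 𝒜 i → v ∉ 𝒜 j → v ∉ 𝒜 k)
    (hik : ¬ 𝒜 i ⊆ 𝒜 k) (hki : ¬ 𝒜 k ⊆ 𝒜 i)
    (h : CEx K 𝒜 ∅ ((𝒜 i)ᶜ ∩ (𝒜 k)ᶜ) 2) : False := by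
  classical
  obtain ⟨b, hbi, hbk⟩ := Finset.not_subset.1 hik
  obtain ⟨a, hak, hai⟩ := Finset.not_subset.1 hki
  have hδ : ∀ (u v : Fin n) (E : List (Fin n) → K), kδ [u, v] E = E [v] - E [u] := by
    intro u v E; simp [kδ, kd]
  refine CEx_false 𝒜 _ 2 h (fun t => if ∀ v ∈ t, v ∉ 𝒜 i then 1 else 0) ?_ [a, b] ?_ rfl ?_ ?_
  · intro s hs hl hP
    obtain ⟨u, v, rfl⟩ := List.length_eq_two.1 hl
    rw [hδ]
    rw [KP_empty] at hP
    push Not at hP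
    obtain ⟨l, hl⟩ := hP
    have hu := hs u (by simp)
    have hv := hs v (by simp)
    have hlu := hl u (by simp)
    have hlv := hl v (by simp)
    simp only [Finset.mem_inter, Finset.mem_compl, not_and_or, not_not] at hu hv
    have := hsub u
    have := hsub v
    rcases hijk l with rfl | rfl | rfl
    · simp [hlu, hlv]
    · have h1 : u ∈ 𝒜 i := by tauto
      have h2 : v ∈ 𝒜 i := by tauto
      simp [h1, h2]
    · have h1 : u ∈ 𝒜 i := by tauto
      have h2 : v ∈ 𝒜 i := by tauto
      simp [h1, h2]
  · simp [hak, hbi]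
  · rw [hδ]; simp [hai, hbi]
  · intro p hp
    rw [KP_empty]
    push Not
    simp only [List.length_cons, List.length_nil] at hp
    interval_cases p
    · exact ⟨k, by simpa using hbk⟩
    · exact ⟨i, by simpa using hai⟩

lemma upperA (𝒜 : Fin 3 → Finset (Fin n)) (z0 z1 z2 : Fin n)
    (h0 : z0 ∈ 𝒜 0 ∧ z0 ∉ 𝒜 1 ∧ z0 ∉ 𝒜 2)
    (h1 : z1 ∉ 𝒜 0 ∧ z1 ∈ 𝒜 1 ∧ z1 ∉ 𝒜 2)
    (h2 : z2 ∉ 𝒜 0 ∧ z2 ∉ 𝒜 1 ∧ z2 ∈ 𝒜 2)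
    (h : CEx K 𝒜 ∅ ((𝒜 0)ᶜ ∩ (𝒜 1)ᶜ ∩ (𝒜 2)ᶜ) 3) : False := by
  classical
  have hδ : ∀ (u v w : Fin n) (E : List (Fin n) → K),
      kδ [u, v, w] E = E [v, w] - E [u, w] + E [u, v] := by
    intro u v w E; simp [kδ, kd]; ring
  set f : Fin n → K := fun v => if v ∉ 𝒜 0 then 1 else 0 with hf
  set E : List (Fin n) → K := fun t => if ∀ v ∈ t, v ∉ 𝒜 2 then
    f (t.getLast?.getD z0) - f (t.head?.getD z0) else 0 with hEdef
  have hE : ∀ u v, E [u, v] = if u ∉ 𝒜 2 ∧ v ∉ 𝒜 2 then f v - f u else 0 := by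
    intro u v; simp [hEdef]
  refine CEx_false 𝒜 _ 3 h E ?_ [z0, z1, z2] ?_ rfl ?_ ?_
  · intro s hs hl hP
    obtain ⟨u, v, w, rfl⟩ := List.length_eq_three.1 hl
    rw [hδ, hE, hE, hE]
    rw [KP_empty] at hP
    push Not at hP
    obtain ⟨l, hl⟩ := hP
    have hu := hs u (by simp)
    have hv := hs v (by simp)
    have hw := hs w (by simp)
    have hlu := hl u (by simp)
    have hlv := hl v (by simp)
    have hlw := hl w (by simp)
    simp only [Finset.mem_inter, Finset.mem_compl, not_and_or, not_not] at hu hv hw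
    fin_cases l <;> simp only [Fin.zero_eta, Fin.mk_one, Fin.reduceFinMk] at hlu hlv hlw
    · simp [hf, hlu, hlv, hlw]
    · simp only [hf]
      by_cases a1 : u ∈ 𝒜 2 <;> by_cases a2 : v ∈ 𝒜 2 <;> by_cases a3 : w ∈ 𝒜 2 <;>
        simp_all
    · simp [hlu, hlv, hlw]
  · simp [h0, h1, h2]
  · rw [hδ, hE, hE, hE]; simp [hf, h0, h1, h2]
  · intro p hp
    rw [KP_empty]
    push Not
    simp only [List.length_cons, List.length_nil] at hp
    interval_cases p
    · exact ⟨0, by simp [h1, h2]⟩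
    · exact ⟨1, by simp [h0, h2]⟩
    · exact ⟨2, by simp [h0, h1]⟩

end Upper

section Lower

variable {n : ℕ} {K : Type*} [Field K]

/-- exponent vector of a set -/
noncomputable def sexp (C : Finset (Fin n)) : Fin n →₀ ℕ := Finsupp.indicator C (fun _ _ => 1)

lemma sexp_apply (C : Finset (Fin n)) (j : Fin n) : sexp C j = if j ∈ C then 1 else 0 := by
  classical
  simp [sexp, Finsupp.indicator_apply]

lemma stanleySpace_eq (C D : Finset (Fin n)) (hCD : C ⊆ D) :
    stanleySpace K (sexp C) D =
      restrictSupport K {m : Fin n →₀ ℕ | C ⊆ m.support ∧ m.support ⊆ D} := by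
  rw [restrictSupport_eq_span, stanleySpace]
  congr 1
  ext f
  constructor
  · rintro ⟨e, he, rfl⟩
    refine ⟨_, ⟨?_, ?_⟩, rfl⟩
    · intro j hj
      simp [sexp_apply, hj]
    · intro j hj
      by_contra hD
      have h1 : e j = 0 := by by_contra h; exact hD (he j h)
      have h2 : j ∉ C := fun h => hD (hCD h)
      simp [sexp_apply, h1, h2] at hj
  · rintro ⟨m, ⟨h1, h2⟩, rfl⟩
    refine ⟨m - sexp C, ?_, ?_⟩
    · intro j hj
      apply h2
      rw [Finsupp.mem_support_iff]
      intro h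
      simp [h] at hj
    · change monomial m 1 = _
      congr 1
      rw [add_tsub_cancel_of_le]
      intro j
      rw [sexp_apply]
      split_ifs with h
      · have := h1 h
        rw [Finsupp.mem_support_iff] at this
        omega
      · exact Nat.zero_le _

/-- transversality -/
def KU (𝒜 : Fin 3 → Finset (Fin n)) (T : Finset (Fin n)) : Prop := ∀ l, ∃ a ∈ T, a ∈ 𝒜 l

lemma decomp_exists (𝒜 : Fin 3 → Finset (Fin n)) (Fr : Finset (Fin n) → Finset (Fin n)) (k : ℕ)
    (hU : ∀ T, KU 𝒜 T → KU 𝒜 (T \ Fr T))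
    (hk : ∀ T, KU 𝒜 T → k ≤ (T ∪ Fr T).card)
    (hinv : ∀ T, KU 𝒜 T → ∀ T', T \ Fr T ⊆ T' → T' ⊆ T ∪ Fr T → Fr T' = Fr T) :
    ∃ D : StanleyDecomp K (varIdeal K (𝒜 0) ⊓ varIdeal K (𝒜 1) ⊓ varIdeal K (𝒜 2)),
      ∀ i, k ≤ (D.Z i).card := by
  classical
  set P : Finset (Finset (Fin n) × Finset (Fin n)) :=
    (Finset.univ.filter (KU 𝒜)).image (fun T => (T \ Fr T, T ∪ Fr T)) with hP
  set e := P.equivFin with he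
  have hPmem : ∀ i : Fin P.card, ∃ T, KU 𝒜 T ∧ (T \ Fr T, T ∪ Fr T) = (e.symm i).1 := by
    intro i
    obtain ⟨T, hT, h⟩ := Finset.mem_image.1 (e.symm i).2
    exact ⟨T, by simpa using hT, h⟩
  set E : Fin P.card → Set (Fin n →₀ ℕ) := fun i =>
    {m | (e.symm i).1.1 ⊆ m.support ∧ m.support ⊆ (e.symm i).1.2} with hEdef
  have hspace : ∀ i, stanleySpace K (sexp (e.symm i).1.1) (e.symm i).1.2 =
      restrictSupport K (E i) := by
    intro i
    apply stanleySpace_eq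
    obtain ⟨T, _, h⟩ := hPmem i
    rw [← h]
    exact Finset.sdiff_subset.trans Finset.subset_union_left
  have hE : ∀ i m, m ∈ E i → KU 𝒜 m.support ∧
      (m.support \ Fr m.support, m.support ∪ Fr m.support) = (e.symm i).1 := by
    intro i m hm
    obtain ⟨T, hT, h⟩ := hPmem i
    simp only [hEdef, Set.mem_ofPred_eq, ← h] at hm
    rw [← h]
    refine ⟨fun l => ?_, ?_⟩
    · obtain ⟨a, ha, ha'⟩ := hU T hT l
      exact ⟨a, hm.1 ha, ha'⟩
    · rw [hinv T hT _ hm.1 hm.2]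
      ext j
      · have h1 := @hm.1 j
        have h2 := @hm.2 j
        simp only [Finset.mem_sdiff, Finset.mem_union] at h1 h2 ⊢
        tauto
      · have h1 := @hm.1 j
        have h2 := @hm.2 j
        simp only [Finset.mem_sdiff, Finset.mem_union] at h1 h2 ⊢
        tauto
  refine ⟨⟨P.card, fun i => sexp (e.symm i).1.1, fun i => (e.symm i).1.2, ?_, ?_, ?_⟩, ?_⟩
  · intro i
    obtain ⟨T, hT, h⟩ := hPmem i
    rw [mem_I_iff, ← h]
    intro m hm l
    have := Finset.mem_of_subset support_monomial_subset hm
    rw [Finset.mem_singleton] at this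
    subst this
    obtain ⟨a, ha, ha'⟩ := hU T hT l
    exact ⟨a, ha', by rw [sexp_apply, if_pos ha]; exact one_ne_zero⟩
  · simp only [hspace]
    intro i
    rw [Submodule.disjoint_def]
    intro f hf hf'
    have hle : (⨆ j, ⨆ (_ : j ≠ i), restrictSupport K (E j)) ≤ restrictSupport K (E i)ᶜ := by
      refine iSup₂_le fun j hj => restrictSupport_mono K ?_
      intro m hm hm'
      apply hj
      have h1 := (hE j m hm).2
      have h2 := (hE i m hm').2
      exact e.symm.injective (Subtype.ext (h1.symm.trans h2))
    have h2 := hle hf'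
    rw [mem_restrictSupport_iff] at hf h2
    rw [← support_eq_empty, Finset.eq_empty_iff_forall_notMem]
    intro m hm
    exact h2 hm (hf hm)
  · simp only [hspace]
    apply le_antisymm
    · refine iSup_le fun i f hf => ?_
      rw [Submodule.restrictScalars_mem, mem_I_iff]
      intro m hm l
      rw [mem_restrictSupport_iff] at hf
      obtain ⟨a, ha, ha'⟩ := (hE i m (hf hm)).1 l
      exact ⟨a, ha', by simpa using ha⟩
    · intro f hf
      rw [Submodule.restrictScalars_mem, mem_I_iff] at hf
      rw [f.as_sum]
      refine Submodule.sum_mem _ fun m hm => ?_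
      have hKU : KU 𝒜 m.support := by
        intro l
        obtain ⟨a, ha, ha'⟩ := hf m hm l
        exact ⟨a, by simpa using ha', ha⟩
      have hmP : (m.support \ Fr m.support, m.support ∪ Fr m.support) ∈ P := by
        rw [hP, Finset.mem_image]
        exact ⟨m.support, by simpa using hKU, rfl⟩
      refine Submodule.mem_iSup_of_mem (e ⟨_, hmP⟩) ?_
      rw [monomial_mem_restrictSupport]
      left
      simp only [hEdef, Set.mem_ofPred_eq, Equiv.symm_apply_apply]
      exact ⟨Finset.sdiff_subset, Finset.subset_union_left⟩
  · intro i
    obtain ⟨T, hT, h⟩ := hPmem i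
    change k ≤ (e.symm i).1.2.card
    rw [← h]
    exact hk T hT

/-- the element lies in at least two of the sets -/
def Heavy (𝒜 : Fin 3 → Finset (Fin n)) (w : Fin n) : Prop := ∃ l l', l ≠ l' ∧ w ∈ 𝒜 l ∧ w ∈ 𝒜 l'

open Classical in
/-- the free set -/
noncomputable def Fr (𝒜 : Fin 3 → Finset (Fin n)) (T : Finset (Fin n)) : Finset (Fin n) :=
  Finset.univ.filter fun v => ¬ Heavy 𝒜 v ∧ ∀ l, v ∈ 𝒜 l → ∃ w ∈ T, Heavy 𝒜 w ∧ w ∈ 𝒜 l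

lemma mem_Fr (𝒜 : Fin 3 → Finset (Fin n)) (T : Finset (Fin n)) (v : Fin n) :
    v ∈ Fr 𝒜 T ↔ ¬ Heavy 𝒜 v ∧ ∀ l, v ∈ 𝒜 l → ∃ w ∈ T, Heavy 𝒜 w ∧ w ∈ 𝒜 l := by
  simp [Fr]

lemma Fr_U (𝒜 : Fin 3 → Finset (Fin n)) (T : Finset (Fin n)) (hT : KU 𝒜 T) :
    KU 𝒜 (T \ Fr 𝒜 T) := by
  intro l
  by_cases h : ∃ w ∈ T, Heavy 𝒜 w ∧ w ∈ 𝒜 l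
  · obtain ⟨w, hw, hh, hl⟩ := h
    refine ⟨w, ?_, hl⟩
    rw [Finset.mem_sdiff, mem_Fr]
    tauto
  · obtain ⟨a, ha, hl⟩ := hT l
    refine ⟨a, ?_, hl⟩
    rw [Finset.mem_sdiff, mem_Fr]
    exact ⟨ha, fun h' => h (h'.2 l hl)⟩

lemma Fr_inv (𝒜 : Fin 3 → Finset (Fin n)) (T T' : Finset (Fin n))
    (h1 : T \ Fr 𝒜 T ⊆ T') (h2 : T' ⊆ T ∪ Fr 𝒜 T) : Fr 𝒜 T' = Fr 𝒜 T := by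
  have key : ∀ w, Heavy 𝒜 w → (w ∈ T' ↔ w ∈ T) := by
    intro w hw
    have hn : w ∉ Fr 𝒜 T := by rw [mem_Fr]; tauto
    have a1 := @h1 w
    have a2 := @h2 w
    simp only [Finset.mem_sdiff, Finset.mem_union] at a1 a2
    tauto
  ext v
  rw [mem_Fr, mem_Fr]
  refine and_congr_right fun _ => forall₂_congr fun l _ => exists_congr fun w => ?_
  have := key w
  tauto

/-- in every class with a private element, `T ∪ Fr T` has a private element -/
lemma light_mem (𝒜 : Fin 3 → Finset (Fin n)) (T : Finset (Fin n)) (hT : KU 𝒜 T) (l : Fin 3)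
    (h : (∃ z, z ∈ 𝒜 l ∧ ¬ Heavy 𝒜 z) ∨ ¬ ∃ w ∈ T, Heavy 𝒜 w ∧ w ∈ 𝒜 l) :
    ∃ s ∈ T ∪ Fr 𝒜 T, s ∈ 𝒜 l ∧ ¬ Heavy 𝒜 s := by
  by_cases hh : ∃ w ∈ T, Heavy 𝒜 w ∧ w ∈ 𝒜 l
  · obtain ⟨z, hz, hz'⟩ := h.resolve_right (not_not.2 hh)
    refine ⟨z, ?_, hz, hz'⟩
    rw [Finset.mem_union, mem_Fr]
    right
    refine ⟨hz', fun l' hl' => ?_⟩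
    by_cases e : l = l'
    · subst e; exact hh
    · exact absurd ⟨l, l', e, hz, hl'⟩ hz'
  · obtain ⟨a, ha, hl⟩ := hT l
    refine ⟨a, Finset.mem_union_left _ ha, hl, fun hv => hh ⟨a, ha, hv, hl⟩⟩

lemma lowerA (𝒜 : Fin 3 → Finset (Fin n)) (k : ℕ)
    (hk : k ≤ ((𝒜 0)ᶜ ∩ (𝒜 1)ᶜ ∩ (𝒜 2)ᶜ).card + 3)
    (hz : ∀ l, ∃ z, z ∈ 𝒜 l ∧ ¬ Heavy 𝒜 z) :
    ∃ D : StanleyDecomp K (varIdeal K (𝒜 0) ⊓ varIdeal K (𝒜 1) ⊓ varIdeal K (𝒜 2)),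
      ∀ i, k ≤ (D.Z i).card := by
  classical
  refine decomp_exists 𝒜 (Fr 𝒜) k (Fr_U 𝒜) ?_ fun T _ T' => Fr_inv 𝒜 T T'
  intro T hT
  refine hk.trans ?_
  choose s hs hsl hsh using fun l => light_mem 𝒜 T hT l (Or.inl (hz l))
  have hinj : ∀ l l', l ≠ l' → s l ≠ s l' := by
    intro l l' hne h
    exact hsh l ⟨l, l', hne, hsl l, h ▸ hsl l'⟩
  have hsub : (𝒜 0)ᶜ ∩ (𝒜 1)ᶜ ∩ (𝒜 2)ᶜ ∪ Finset.univ.image s ⊆ T ∪ Fr 𝒜 T := by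
    intro v hv
    rcases Finset.mem_union.1 hv with hv | hv
    · apply Finset.mem_union_right
      simp only [Finset.mem_inter, Finset.mem_compl] at hv
      have : ∀ l, v ∉ 𝒜 l := by
        intro l; fin_cases l
        exacts [hv.1.1, hv.1.2, hv.2]
      rw [mem_Fr]
      exact ⟨fun ⟨l, _, _, h, _⟩ => this l h, fun l h => absurd h (this l)⟩
    · obtain ⟨l, _, rfl⟩ := Finset.mem_image.1 hv
      exact hs l
  refine le_trans (le_of_eq ?_) (Finset.card_le_card hsub)
  rw [Finset.card_union_of_disjoint]
  · congr 1
    rw [Finset.card_image_of_injective]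
    · simp
    · intro l l' h
      by_contra hne
      exact hinj l l' hne h
  · rw [Finset.disjoint_right]
    intro v hv hv'
    obtain ⟨l, _, rfl⟩ := Finset.mem_image.1 hv
    simp only [Finset.mem_inter, Finset.mem_compl] at hv'
    have := hsl l
    revert this
    generalize s l = z at hv'
    fin_cases l
    exacts [hv'.1.1, hv'.1.2, hv'.2]

lemma card_aux (N D : Finset (Fin n)) (w y : Fin n) (hN : N ⊆ D) (hw : w ∈ D) (hy : y ∈ D)
    (hwN : w ∉ N) (hyN : y ∉ N) (hne : w ≠ y) : N.card + 2 ≤ D.card := by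
  classical
  have h : insert w (insert y N) ⊆ D := by
    intro v hv
    simp only [Finset.mem_insert] at hv
    rcases hv with rfl | rfl | h
    exacts [hw, hy, hN h]
  have := Finset.card_le_card h
  rw [Finset.card_insert_of_notMem (by simp [hne, hwN]), Finset.card_insert_of_notMem hyN] at this
  omega

/-- auxiliary count for the case without private element in class `k`  -/
lemma countBC (𝒜 : Fin 3 → Finset (Fin n)) (i j k : Fin 3) (hij : i ≠ j)
    (hijk : ∀ l, l = i ∨ l = j ∨ l = k)
    (T : Finset (Fin n)) (w : Fin n) (hw : w ∈ T) (hwh : Heavy 𝒜 w)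
    (hwk : w ∈ 𝒜 k)
    (hi : ∃ w ∈ T, Heavy 𝒜 w ∧ w ∈ 𝒜 i)
    (hj : ∃ s ∈ T ∪ Fr 𝒜 T, s ∈ 𝒜 j ∧ ¬ Heavy 𝒜 s) :
    ((𝒜 j)ᶜ ∩ (𝒜 k)ᶜ).card + 2 ≤ (T ∪ Fr 𝒜 T).card := by
  classical
  obtain ⟨s, hs, hsj, hsh⟩ := hj
  refine card_aux _ _ w s ?_ (Finset.mem_union_left _ hw) hs ?_ ?_ ?_
  · intro v hv
    simp only [Finset.mem_inter, Finset.mem_compl] at hv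
    apply Finset.mem_union_right
    rw [mem_Fr]
    refine ⟨?_, fun l hl => ?_⟩
    · rintro ⟨l, l', hne, h, h'⟩
      rcases hijk l with rfl | rfl | rfl
      · rcases hijk l' with rfl | rfl | rfl
        · exact hne rfl
        · exact hv.1 h'
        · exact hv.2 h'
      · exact hv.1 h
      · exact hv.2 h
    · rcases hijk l with rfl | rfl | rfl
      · exact hi
      · exact absurd hl hv.1
      · exact absurd hl hv.2
  · simp [hwk]
  · simp [hsj]
  · rintro rfl; exact hsh hwh

lemma lowerBC (𝒜 : Fin 3 → Finset (Fin n)) (i j k : Fin 3) (hij : i ≠ j)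
    (hijk : ∀ l, l = i ∨ l = j ∨ l = k)
    (hno : ∀ z, z ∈ 𝒜 k → Heavy 𝒜 z) (m : ℕ)
    (hm1 : m ≤ ((𝒜 j)ᶜ ∩ (𝒜 k)ᶜ).card + 2) (hm2 : m ≤ ((𝒜 i)ᶜ ∩ (𝒜 k)ᶜ).card + 2)
    (hz : (∃ z, z ∈ 𝒜 i ∧ ¬ Heavy 𝒜 z) ∨ (∃ z, z ∈ 𝒜 j ∧ ¬ Heavy 𝒜 z)) :
    ∃ D : StanleyDecomp K (varIdeal K (𝒜 0) ⊓ varIdeal K (𝒜 1) ⊓ varIdeal K (𝒜 2)),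
      ∀ i, m ≤ (D.Z i).card := by
  classical
  refine decomp_exists 𝒜 (Fr 𝒜) m (Fr_U 𝒜) ?_ fun T _ T' => Fr_inv 𝒜 T T'
  intro T hT
  obtain ⟨w, hw, hwk⟩ := hT k
  have hwh := hno w hwk
  have hor : w ∈ 𝒜 i ∨ w ∈ 𝒜 j := by
    obtain ⟨l, l', hne, h, h'⟩ := hwh
    rcases hijk l with rfl | rfl | rfl
    · exact Or.inl h
    · exact Or.inr h
    · rcases hijk l' with rfl | rfl | rfl
      · exact Or.inl h'
      · exact Or.inr h'
      · exact absurd rfl hne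
  have hijk' : ∀ l, l = j ∨ l = i ∨ l = k := fun l => by have := hijk l; tauto
  by_cases hi : ∃ w ∈ T, Heavy 𝒜 w ∧ w ∈ 𝒜 i
  · by_cases hj : ∃ w ∈ T, Heavy 𝒜 w ∧ w ∈ 𝒜 j
    · rcases hz with hz | hz
      · exact hm2.trans (countBC 𝒜 j i k hij.symm hijk' T w hw hwh hwk hj
          (light_mem 𝒜 T hT i (Or.inl hz)))
      · exact hm1.trans (countBC 𝒜 i j k hij hijk T w hw hwh hwk hi
          (light_mem 𝒜 T hT j (Or.inl hz)))
    · exact hm1.trans (countBC 𝒜 i j k hij hijk T w hw hwh hwk hi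
          (light_mem 𝒜 T hT j (Or.inr hj)))
  · have hj : ∃ w ∈ T, Heavy 𝒜 w ∧ w ∈ 𝒜 j :=
      ⟨w, hw, hwh, hor.resolve_left fun h => hi ⟨w, hw, hwh, h⟩⟩
    exact hm2.trans (countBC 𝒜 j i k hij.symm hijk' T w hw hwh hwk hj
          (light_mem 𝒜 T hT i (Or.inr hi)))

lemma lowerE (𝒜 : Fin 3 → Finset (Fin n)) (i j k : Fin 3)
    (hijk : ∀ l, l = i ∨ l = j ∨ l = k)
    (hno : ∀ l, ∀ z, z ∈ 𝒜 l → Heavy 𝒜 z) (m : ℕ)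
    (hm : m ≤ ((𝒜 i)ᶜ ∩ (𝒜 k)ᶜ).card + 2) (hik : ¬ 𝒜 i ⊆ 𝒜 k) :
    ∃ D : StanleyDecomp K (varIdeal K (𝒜 0) ⊓ varIdeal K (𝒜 1) ⊓ varIdeal K (𝒜 2)),
      ∀ i, m ≤ (D.Z i).card := by
  classical
  obtain ⟨x, hxi, hxk⟩ := Finset.not_subset.1 hik
  set Z : Finset (Fin n) := (𝒜 i)ᶜ ∩ (𝒜 k)ᶜ with hZ
  have hZm : ∀ v, v ∈ Z ↔ ∀ l, v ∉ 𝒜 l := by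
    intro v
    simp only [hZ, Finset.mem_inter, Finset.mem_compl]
    constructor
    · rintro ⟨h1, h2⟩ l hl
      obtain ⟨l, l', hne, h, h'⟩ := hno l v hl
      rcases hijk l with rfl | rfl | rfl
      · exact h1 h
      · rcases hijk l' with rfl | rfl | rfl
        · exact h1 h'
        · exact hne rfl
        · exact h2 h'
      · exact h2 h
    · intro h; exact ⟨h i, h k⟩
  have hxZ : x ∉ Z := fun h => (hZm x).1 h i hxi
  set Q : Finset (Fin n) → Prop := fun T => ∃ c, (∀ l, c ∈ 𝒜 l) ∧ (T \ Z) \ {x} = {c} with hQ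
  have hcx : ∀ c, (∀ l, c ∈ 𝒜 l) → c ≠ x ∧ c ∉ Z := by
    intro c hc
    exact ⟨fun h => hxk (h ▸ hc k), fun h => (hZm c).1 h i (hc i)⟩
  set G : Finset (Fin n) → Finset (Fin n) := fun T => if Q T then insert x Z else Z with hG
  have hZG : ∀ T, Z ⊆ G T := by
    intro T; simp only [hG]; split_ifs
    · exact Finset.subset_insert _ _
    · exact subset_rfl
  refine decomp_exists 𝒜 G m ?_ ?_ ?_
  · intro T hT l
    by_cases hq : Q T
    · obtain ⟨c, hc, hTc⟩ := hq
      refine ⟨c, ?_, hc l⟩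
      have hcT : c ∈ (T \ Z) \ {x} := by rw [hTc]; simp
      have hq : Q T := ⟨c, hc, hTc⟩
      simp only [hG, if_pos hq]
      simp only [Finset.mem_sdiff, Finset.mem_singleton, Finset.mem_insert] at hcT ⊢
      tauto
    · obtain ⟨a, ha, hl⟩ := hT l
      refine ⟨a, ?_, hl⟩
      simp only [hG, if_neg hq]
      rw [Finset.mem_sdiff, hZm]
      exact ⟨ha, fun h => h l hl⟩
  · intro T hT
    refine hm.trans ?_
    by_cases hq : Q T
    · obtain ⟨c, hc, hTc⟩ := hq
      have hcT : c ∈ (T \ Z) \ {x} := by rw [hTc]; simp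
      have hq : Q T := ⟨c, hc, hTc⟩
      simp only [Finset.mem_sdiff, Finset.mem_singleton] at hcT
      refine card_aux Z _ c x ((hZG T).trans Finset.subset_union_right)
        (Finset.mem_union_left _ hcT.1.1) (Finset.mem_union_right _ ?_) hcT.1.2 hxZ hcT.2
      simp only [hG, if_pos hq]
      simp
    · obtain ⟨a, ha, hai⟩ := hT i
      have haZ : a ∉ Z := fun h => (hZm a).1 h i hai
      have : ∃ b ∈ T, b ∉ Z ∧ b ≠ a := by
        by_contra hall
        push Not at hall
        have hac : ∀ l, a ∈ 𝒜 l := by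
          intro l
          obtain ⟨b, hb, hbl⟩ := hT l
          have : b ∉ Z := fun h => (hZm b).1 h l hbl
          rw [← hall b hb this]; exact hbl
        apply hq
        refine ⟨a, hac, ?_⟩
        ext b
        simp only [Finset.mem_sdiff, Finset.mem_singleton]
        constructor
        · rintro ⟨⟨h1, h2⟩, h3⟩; exact hall b h1 h2
        · rintro rfl; exact ⟨⟨ha, haZ⟩, (hcx b hac).1⟩
      obtain ⟨b, hb, hbZ, hba⟩ := this
      exact card_aux Z _ b a ((hZG T).trans Finset.subset_union_right)
        (Finset.mem_union_left _ hb) (Finset.mem_union_left _ ha) hbZ haZ hba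
  · intro T hT T' h1 h2
    have hkey : (T' \ Z) \ {x} = (T \ Z) \ {x} := by
      ext v
      have a1 := @h1 v
      have a2 := @h2 v
      have : v ∈ G T → v ∈ Z ∨ v = x := by
        simp only [hG]; split_ifs
        · rw [Finset.mem_insert]; tauto
        · tauto
      simp only [Finset.mem_sdiff, Finset.mem_union, Finset.mem_singleton] at a1 a2 ⊢
      tauto
    have : Q T' ↔ Q T := by simp only [hQ, hkey]
    simp only [hG, this]

end Lower

section Main

variable {n : ℕ} {K : Type*} [Field K]

lemma exists_decomp (𝒜 : Fin 3 → Finset (Fin n)) (hinc : ∀ l l', l ≠ l' → ¬ 𝒜 l ⊆ 𝒜 l')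
    (rs : List (MvPolynomial (Fin n) K))
    (hrs : ∀ r ∈ rs, r ∈ maxIdeal n K)
    (hreg : RingTheory.Sequence.IsWeaklyRegular
      ↥(varIdeal K (𝒜 0) ⊓ varIdeal K (𝒜 1) ⊓ varIdeal K (𝒜 2)) rs) :
    ∃ D : StanleyDecomp K (varIdeal K (𝒜 0) ⊓ varIdeal K (𝒜 1) ⊓ varIdeal K (𝒜 2)),
      ∀ i, rs.length ≤ (D.Z i).card := by
  classical
  by_cases hA : ∀ l, ∃ z, z ∈ 𝒜 l ∧ ¬ Heavy 𝒜 z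
  · refine lowerA 𝒜 _ ?_ hA
    by_contra hlt
    have hC := CEx_of_regular 𝒜 rs hrs hreg ((𝒜 0)ᶜ ∩ (𝒜 1)ᶜ ∩ (𝒜 2)ᶜ) 3 (by omega)
    have hz : ∀ l, ∃ z, z ∈ 𝒜 l ∧ ∀ l', l' ≠ l → z ∉ 𝒜 l' := by
      intro l
      obtain ⟨z, hz, hh⟩ := hA l
      exact ⟨z, hz, fun l' hne h => hh ⟨l', l, hne, h, hz⟩⟩
    obtain ⟨z0, a0, b0⟩ := hz 0
    obtain ⟨z1, a1, b1⟩ := hz 1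
    obtain ⟨z2, a2, b2⟩ := hz 2
    exact upperA 𝒜 z0 z1 z2 ⟨a0, b0 1 (by decide), b0 2 (by decide)⟩
      ⟨b1 0 (by decide), a1, b1 2 (by decide)⟩ ⟨b2 0 (by decide), b2 1 (by decide), a2⟩ hC
  · push Not at hA
    obtain ⟨k, hk⟩ := hA
    have : ∃ i j : Fin 3, i ≠ j ∧ i ≠ k ∧ j ≠ k ∧ ∀ l, l = i ∨ l = j ∨ l = k := by
      clear hk; revert k; decide
    obtain ⟨i, j, hij, hik, hjk, hijk⟩ := this
    have hijk' : ∀ l, l = j ∨ l = i ∨ l = k := fun l => by have := hijk l; tauto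
    have hsub : ∀ v, v ∉ 𝒜 i → v ∉ 𝒜 j → v ∉ 𝒜 k := by
      intro v hvi hvj hvk
      obtain ⟨l, l', hne, h, h'⟩ := hk v hvk
      rcases hijk l with rfl | rfl | rfl
      · exact hvi h
      · exact hvj h
      · rcases hijk l' with rfl | rfl | rfl
        · exact hvi h'
        · exact hvj h'
        · exact hne rfl
    have hm2 : rs.length ≤ ((𝒜 i)ᶜ ∩ (𝒜 k)ᶜ).card + 2 := by
      by_contra hlt
      exact upperBC 𝒜 i j k hijk hsub (hinc i k hik) (hinc k i hik.symm)
        (CEx_of_regular 𝒜 rs hrs hreg _ 2 (by omega))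
    have hm1 : rs.length ≤ ((𝒜 j)ᶜ ∩ (𝒜 k)ᶜ).card + 2 := by
      by_contra hlt
      exact upperBC 𝒜 j i k hijk' (fun v h1 h2 => hsub v h2 h1) (hinc j k hjk) (hinc k j hjk.symm)
        (CEx_of_regular 𝒜 rs hrs hreg _ 2 (by omega))
    by_cases hz : (∃ z, z ∈ 𝒜 i ∧ ¬ Heavy 𝒜 z) ∨ (∃ z, z ∈ 𝒜 j ∧ ¬ Heavy 𝒜 z)
    · exact lowerBC 𝒜 i j k hij hijk hk _ hm1 hm2 hz
    · push Not at hz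
      refine lowerE 𝒜 i j k hijk ?_ _ hm2 (hinc i k hik)
      intro l
      rcases hijk l with rfl | rfl | rfl
      exacts [hz.1, hz.2, hk]

end Main

lemma stanley_main {K : Type*} [Field K] (n : ℕ) (𝒜 : Fin 3 → Finset (Fin n))
    (hinc : ∀ l l', l ≠ l' → ¬ 𝒜 l ⊆ 𝒜 l') :
    sdepth (varIdeal K (𝒜 0) ⊓ varIdeal K (𝒜 1) ⊓ varIdeal K (𝒜 2)) ≥
      moduleDepth (MvPolynomial (Fin n) K) (maxIdeal n K)
        ↥(varIdeal K (𝒜 0) ⊓ varIdeal K (𝒜 1) ⊓ varIdeal K (𝒜 2)) := by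
  classical
  have hbdd : BddAbove {k | ∃ D : StanleyDecomp K
      (varIdeal K (𝒜 0) ⊓ varIdeal K (𝒜 1) ⊓ varIdeal K (𝒜 2)), ∀ i, k ≤ (D.Z i).card} := by
    refine ⟨n, ?_⟩
    rintro k ⟨D, hD⟩
    have hm : D.m ≠ 0 := by
      intro h0
      have ht := D.total
      have : IsEmpty (Fin D.m) := by rw [h0]; infer_instance
      rw [iSup_of_empty] at ht
      have hmem : monomial (sexp Finset.univ) (1 : K) ∈ Submodule.restrictScalars K
          (varIdeal K (𝒜 0) ⊓ varIdeal K (𝒜 1) ⊓ varIdeal K (𝒜 2)) := by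
        rw [Submodule.restrictScalars_mem, mem_I_iff]
        intro m hm l
        have := Finset.mem_of_subset support_monomial_subset hm
        rw [Finset.mem_singleton] at this
        subst this
        have : ∃ l', l ≠ l' := by revert l; decide
        obtain ⟨l', hl'⟩ := this
        obtain ⟨a, ha, -⟩ := Finset.not_subset.1 (hinc l l' hl')
        exact ⟨a, ha, by simp [sexp_apply]⟩
      rw [← ht, Submodule.mem_bot, monomial_eq_zero] at hmem
      exact one_ne_zero hmem
    have := hD ⟨0, Nat.pos_of_ne_zero hm⟩
    exact this.trans ((Finset.card_le_univ _).trans (by simp))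
  change moduleDepth _ _ _ ≤ sdepth _
  rw [moduleDepth]
  apply csSup_le'
  rintro k ⟨rs, rfl, hrs, hreg⟩
  exact le_csSup hbdd (exists_decomp 𝒜 hinc rs hrs hreg.toIsWeaklyRegular)

/-- Stanley's conjecture for the intersection of three pairwise
incomparable nonzero monomial prime ideals: `sdepth I ≥ depth I`. -/
theorem stanley_conjecture_three_primes {K : Type*} [Field K] (n : ℕ)
    (A1 A2 A3 : Finset (Fin n)) :
    letI P1 : Ideal (MvPolynomial (Fin n) K) := varIdeal K A1
    letI P2 : Ideal (MvPolynomial (Fin n) K) := varIdeal K A2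
    letI P3 : Ideal (MvPolynomial (Fin n) K) := varIdeal K A3
    P1 ≠ ⊥ → P2 ≠ ⊥ → P3 ≠ ⊥ →
    ¬P1 ≤ P2 → ¬P2 ≤ P1 → ¬P1 ≤ P3 → ¬P3 ≤ P1 → ¬P2 ≤ P3 → ¬P3 ≤ P2 →
    sdepth (P1 ⊓ P2 ⊓ P3) ≥
      moduleDepth (MvPolynomial (Fin n) K) (maxIdeal n K) ↥(P1 ⊓ P2 ⊓ P3) := by
  intro _ _ _ h12 h21 h13 h31 h23 h32
  exact stanley_main n ![A1, A2, A3] (by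
    have hle : ∀ A B : Finset (Fin n), ¬ varIdeal K A ≤ varIdeal K B → ¬ A ⊆ B :=
      fun A B h hs => h (Ideal.span_mono (Set.image_mono (by exact_mod_cast hs)))
    intro l l' hne
    fin_cases l <;> fin_cases l' <;> first | exact absurd rfl hne | skip
    exacts [hle _ _ h12, hle _ _ h13, hle _ _ h21, hle _ _ h23, hle _ _ h31, hle _ _ h32])
end
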